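/- Let d ≥ 2 and let 𝒮 be a weighted step set satisfying the standing assumptions with negative drift (B(1) < A(1)), and suppose some step i ∈ 𝒮 with i_d = 0 has w_i > 0. Set ρ = √(A(1)/B(1)), S(1,ρ) = A(1)/ρ + Q(1) + ρB(1) = Q(1) + 2√(A(1)B(1)), b_k(1,ρ) = Σ_{i∈𝒮, i_k=1} w_i ρ^{i_d} for 1 ≤ k ≤ d−1, and C_ρ = [S(1,ρ)·ρ / (2 π^{d/2} A(1) (1 − 1/ρ)²)] · √( S(1,ρ)^d / (ρ · b_1(1,ρ)⋯b_{d−1}(1,ρ) · B(1)) ). Then there is a constant c > 0 such that for all n ≥ 1, | s_n · S(1,ρ)^{−n} · n^{d/2+1} − C_ρ | ≤ c/n; that is, s_n = S(1,ρ)^n · n^{−d/2−1} · C_ρ · (1 + O(1/n)). -/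

import Mathlib

/-!
Tilting the last coordinate of the walk by `ρ` removes its drift and turns the total step weight
into `S(1,ρ)`. In the symmetric coordinates the walks are counted by a Fourier integral against a
kernel which vanishes at `-1`, so that the constraint there takes care of itself; what remains under
the integral is a half-line walk whose weights are the Fourier transforms `A`, `Q`, `B` of the three
slices of the step set. By the reflection principle, `B` times `n + 1` times the half-line count is
`∑ k [y ^ k] (A / y + Q + B y) ^ (n + 1)` over `k ≥ 0`, an integral over the circle `|y| = ρ`. The
division by `B` is harmless: where `B` is small, so is the half-line count.

The walk count is thus, up to an exponentially small error, an integral over the `d`-dimensional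
torus of an amplitude times the power `n + 1` of the symbol of the tilted walk. The step with
`i_d = 0` keeps the symbol away from modulus `1` at the angle `π` of the last coordinate, and
at the angles `π` of the other coordinates the amplitude vanishes to second order. So only the
origin contributes, and the Laplace method applies there; since the expansions of the symbol and of
the amplitude are real to leading order, the error is a full factor `1 / n` smaller than the main
term.
-/

open Finset

/-- The weighted number of walks of length `n` with steps in `S` (weights `w`),
beginning at the origin and confined to the non-negative orthant. -/
noncomputable def weightedWalkCount (d : ℕ) (S : Finset (Fin d → ℤ))
    (w : (Fin d → ℤ) → ℝ) (n : ℕ) : ℝ :=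
  ∑ u : Fin n → S,
    if (∀ k : Fin n, ∀ m : Fin d, 0 ≤ ∑ j ∈ Finset.Iic k, (u j : Fin d → ℤ) m)
    then ∏ k : Fin n, w (u k) else 0

namespace OrthantWalk

/-! ### Walks on the half-line -/

section HalfLine

variable {R : Type*} [CommRing R]

/-- The coefficient of `y ^ k` in `(b * y + q + a / y) ^ n`. -/
def trinomialCoeff (a b q : R) : ℕ → ℤ → R
  | 0, k => if k = 0 then 1 else 0
  | n + 1, k =>
      b * trinomialCoeff a b q n (k - 1) + q * trinomialCoeff a b q n k +
        a * trinomialCoeff a b q n (k + 1)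

/-- The weighted number of `n`-step walks on `ℤ` that begin at `z`, stay non-negative (the
starting point included) and have steps `1`, `0`, `-1` of weights `b`, `q`, `a`. -/
def halfLineCount (a b q : R) : ℕ → ℤ → R
  | 0, z => if 0 ≤ z then 1 else 0
  | n + 1, z =>
      if 0 ≤ z then
        b * halfLineCount a b q n (z + 1) + q * halfLineCount a b q n z +
          a * halfLineCount a b q n (z - 1)
      else 0

/-- The weighted number of `n`-step non-negative walks from `0` to `k`, with steps `1`, `0`, `-1`
of weights `b`, `q`, `a`. -/
def halfLineCountTo (a b q : R) : ℕ → ℤ → R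
  | 0, k => if k = 0 then 1 else 0
  | n + 1, k =>
      if 0 ≤ k then
        b * halfLineCountTo a b q n (k - 1) + q * halfLineCountTo a b q n k +
          a * halfLineCountTo a b q n (k + 1)
      else 0

variable (a b q : R)

lemma trinomialCoeff_succ (n : ℕ) (k : ℤ) :
    trinomialCoeff a b q (n + 1) k =
      b * trinomialCoeff a b q n (k - 1) + q * trinomialCoeff a b q n k +
        a * trinomialCoeff a b q n (k + 1) :=
  rfl

lemma trinomialCoeff_of_lt {n : ℕ} {k : ℤ} (hk : (n : ℤ) < k) : trinomialCoeff a b q n k = 0 := by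
  induction n generalizing k with
  | zero => rw [trinomialCoeff, if_neg (by omega)]
  | succ n ih =>
    rw [trinomialCoeff_succ, ih (by omega), ih (by omega), ih (by omega)]
    simp

-- This is `y * d/dy` applied to the generating polynomial `(b * y + q + a / y) ^ (n + 1)`.
lemma mul_trinomialCoeff_succ (n : ℕ) (k : ℤ) :
    (k : R) * trinomialCoeff a b q (n + 1) k =
      (n + 1) * (b * trinomialCoeff a b q n (k - 1) - a * trinomialCoeff a b q n (k + 1)) := by
  induction n generalizing k with
  | zero =>
    by_cases h0 : k = 0
    · simp [h0, trinomialCoeff]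
    by_cases h1 : k = 1
    · simp [h1, trinomialCoeff]
    by_cases h2 : k = -1
    · simp [h2, trinomialCoeff]
    simp [trinomialCoeff, h0, show k - 1 ≠ 0 by omega, show k + 1 ≠ 0 by omega]
  | succ n ih =>
    have hl := ih (k - 1)
    have hr := ih (k + 1)
    have el := trinomialCoeff_succ a b q n (k - 1)
    have er := trinomialCoeff_succ a b q n (k + 1)
    rw [sub_add_cancel] at hl el
    rw [add_sub_cancel_right] at hr er
    rw [trinomialCoeff_succ]
    push_cast at *
    linear_combination b * hl + q * ih k + a * hr - (n + 1) * b * el + (n + 1) * a * er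

lemma pow_mul_trinomialCoeff_neg (n k : ℕ) :
    b ^ k * trinomialCoeff a b q n (-k) = a ^ k * trinomialCoeff a b q n k := by
  induction n generalizing k with
  | zero =>
    rcases eq_or_ne k 0 with rfl | hk
    · simp
    · simp [trinomialCoeff, hk]
  | succ n ih =>
    cases k with
    | zero => simp
    | succ k =>
      have h0 := ih k
      have h1 := ih (k + 1)
      have h2 := ih (k + 2)
      simp only [trinomialCoeff_succ]
      push_cast at *
      rw [show -((k : ℤ) + 1) - 1 = -(k + 2) by ring, show -((k : ℤ) + 1) + 1 = -k by ring,
        show (k : ℤ) + 1 - 1 = k by ring, show (k : ℤ) + 1 + 1 = k + 2 by ring]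
      linear_combination h2 + q * h1 + a * b * h0

lemma halfLineCount_of_neg (n : ℕ) {z : ℤ} (hz : z < 0) : halfLineCount a b q n z = 0 := by
  cases n <;> rw [halfLineCount, if_neg (by omega)]

lemma halfLineCountTo_of_neg (n : ℕ) {k : ℤ} (hk : k < 0) : halfLineCountTo a b q n k = 0 := by
  cases n <;> rw [halfLineCountTo, if_neg (by omega)]

lemma halfLineCountTo_of_lt {n : ℕ} {k : ℤ} (hk : (n : ℤ) < k) :
    halfLineCountTo a b q n k = 0 := by
  induction n generalizing k with
  | zero => rw [halfLineCountTo, if_neg (by omega)]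
  | succ n ih =>
    rw [halfLineCountTo, ih (by omega), ih (by omega), ih (by omega)]
    simp

/-- The weighted reflection principle. -/
lemma mul_halfLineCountTo (n : ℕ) {k : ℤ} (hk : -1 ≤ k) :
    b * halfLineCountTo a b q n k =
      b * trinomialCoeff a b q n k - a * trinomialCoeff a b q n (k + 2) := by
  induction n generalizing k with
  | zero => simp [halfLineCountTo, trinomialCoeff, show k + 2 ≠ 0 by omega]
  | succ n ih =>
    rcases hk.eq_or_lt with rfl | h
    · have := pow_mul_trinomialCoeff_neg a b q (n + 1) 1
      rw [halfLineCountTo_of_neg _ _ _ _ (by norm_num), show (-1 : ℤ) + 2 = 1 by norm_num]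
      simp only [pow_one, Nat.cast_one] at this
      linear_combination -this
    · have h1 := ih (k := k - 1) (by omega)
      have h3 := ih (k := k + 1) (by omega)
      rw [show k - 1 + 2 = k + 2 - 1 by ring] at h1
      rw [show k + 1 + 2 = k + 2 + 1 by ring] at h3
      rw [halfLineCountTo, if_pos (by omega), trinomialCoeff_succ, trinomialCoeff_succ]
      linear_combination b * h1 + q * ih (k := k) (by omega) + a * h3

lemma sum_halfLineCountTo_succ_mul {n K : ℕ} (m : ℕ) (hK : n + 1 < K) :
    ∑ k ∈ range K, halfLineCountTo a b q (n + 1) k * halfLineCount a b q m k =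
      ∑ k ∈ range K, halfLineCountTo a b q n k * halfLineCount a b q (m + 1) k := by
  let up (k : ℕ) : R := halfLineCountTo a b q n (k - 1) * halfLineCount a b q m k
  let down (k : ℕ) : R := halfLineCountTo a b q n k * halfLineCount a b q m (k - 1)
  have hterm (k : ℕ) : halfLineCountTo a b q (n + 1) k * halfLineCount a b q m k -
      halfLineCountTo a b q n k * halfLineCount a b q (m + 1) k =
        a * (down (k + 1) - down k) - b * (up (k + 1) - up k) := by
    simp only [up, down]
    rw [halfLineCountTo, halfLineCount, if_pos (by omega), if_pos (by omega)]
    push_cast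
    rw [add_sub_cancel_right]
    ring
  have hup0 : up 0 = 0 := by simp [up, halfLineCountTo_of_neg]
  have hdown0 : down 0 = 0 := by simp [down, halfLineCount_of_neg]
  have hupK : up K = 0 := by simp only [up]; rw [halfLineCountTo_of_lt _ _ _ (by omega), zero_mul]
  have hdownK : down K = 0 := by
    simp only [down]; rw [halfLineCountTo_of_lt _ _ _ (by omega), zero_mul]
  rw [← sub_eq_zero, ← sum_sub_distrib, sum_congr rfl fun k _ => hterm k, sum_sub_distrib,
    ← mul_sum, ← mul_sum, sum_range_sub, sum_range_sub, hup0, hdown0, hupK, hdownK]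
  simp

lemma sum_halfLineCountTo_mul {n K : ℕ} (m : ℕ) (hK : n < K) :
    ∑ k ∈ range K, halfLineCountTo a b q n k * halfLineCount a b q m k =
      halfLineCount a b q (n + m) 0 := by
  induction n generalizing m with
  | zero =>
    rw [sum_eq_single_of_mem 0 (mem_range.2 hK) fun k _ hk => by simp [halfLineCountTo, hk]]
    simp [halfLineCountTo]
  | succ n ih =>
    rw [sum_halfLineCountTo_succ_mul _ _ _ _ hK, ih _ (by omega), Nat.add_right_comm, add_assoc]

lemma mul_halfLineCount_zero (n : ℕ) :
    b * (n + 1) * halfLineCount a b q n 0 =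
      ∑ k ∈ range (n + 2), (k : R) * trinomialCoeff a b q (n + 1) k := by
  have hsum : halfLineCount a b q n 0 = ∑ k ∈ range (n + 1), halfLineCountTo a b q n k := by
    rw [← add_zero n, ← sum_halfLineCountTo_mul a b q 0 (Nat.lt_succ_self n)]
    simp [halfLineCount]
  rw [hsum, mul_sum, sum_range_succ' _ (n + 1)]
  simp only [Nat.cast_zero, zero_mul, add_zero]
  refine sum_congr rfl fun k _ => ?_
  have hrefl := mul_halfLineCountTo a b q n (k := k) (by omega)
  have hderiv := mul_trinomialCoeff_succ a b q n ((k : ℤ) + 1)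
  rw [add_sub_cancel_right, show (k : ℤ) + 1 + 1 = k + 2 by ring] at hderiv
  push_cast at hderiv ⊢
  linear_combination (n + 1) * hrefl - hderiv

end HalfLine

lemma abs_halfLineCount_le (a b q : ℝ) {ρ : ℝ} (hρ : 1 ≤ ρ) (n : ℕ) (z : ℤ) :
    |halfLineCount a b q n z| ≤ ρ ^ z * (|q| + ρ * |b| + |a| / ρ) ^ n := by
  have hρ0 : 0 < ρ := by linarith
  induction n generalizing z with
  | zero =>
    rw [halfLineCount]
    split_ifs with h
    · simpa using one_le_zpow₀ hρ h
    · simp only [abs_zero]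
      positivity
  | succ n ih =>
    rw [halfLineCount]
    split_ifs with h
    · have hup := ih (z + 1)
      have hdown := ih (z - 1)
      rw [zpow_add_one₀ hρ0.ne'] at hup
      rw [zpow_sub_one₀ hρ0.ne'] at hdown
      calc _ ≤ |b| * |halfLineCount a b q n (z + 1)| + |q| * |halfLineCount a b q n z| +
              |a| * |halfLineCount a b q n (z - 1)| := by
            simpa only [abs_mul] using abs_add_three (b * halfLineCount a b q n (z + 1))
              (q * halfLineCount a b q n z) (a * halfLineCount a b q n (z - 1))
        _ ≤ |b| * (ρ ^ z * ρ * (|q| + ρ * |b| + |a| / ρ) ^ n) +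
              |q| * (ρ ^ z * (|q| + ρ * |b| + |a| / ρ) ^ n) +
              |a| * (ρ ^ z * ρ⁻¹ * (|q| + ρ * |b| + |a| / ρ) ^ n) := by
            gcongr
            exact ih z
        _ = _ := by
            rw [pow_succ]
            ring
    · simp only [abs_zero]
      positivity

lemma continuous_halfLineCount {X R : Type*} [TopologicalSpace X] [CommRing R] [TopologicalSpace R]
    [IsTopologicalSemiring R] {a b q : X → R} (ha : Continuous a) (hb : Continuous b)
    (hq : Continuous q) (n : ℕ) (z : ℤ) :
    Continuous fun x => halfLineCount (a x) (b x) (q x) n z := by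
  induction n generalizing z with
  | zero => exact continuous_const
  | succ n ih =>
    simp only [halfLineCount]
    split_ifs
    · exact ((hb.mul (ih _)).add (hq.mul (ih _))).add (ha.mul (ih _))
    · exact continuous_const

/-! ### Uniform measures on the circle and the torus -/

section Measures

open MeasureTheory Real Set

lemma integrable_of_ae_norm_le {X E : Type*} [NormedAddCommGroup X] [ProperSpace X]
    [MeasurableSpace X] [OpensMeasurableSpace X] [NormedAddCommGroup E]
    [SecondCountableTopologyEither X E] {μ : Measure X} [IsFiniteMeasure μ] {R : ℝ}
    (hμ : ∀ᵐ x ∂μ, ‖x‖ ≤ R) {f : X → E} (hf : Continuous f) : Integrable f μ := by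
  obtain ⟨C, hC⟩ := (isCompact_closedBall (0 : X) R).exists_bound_of_continuousOn hf.continuousOn
  exact Integrable.of_bound hf.aestronglyMeasurable C
    (hμ.mono fun x hx => hC x (mem_closedBall_zero_iff.2 hx))

/-- The uniform probability measure on `(-π, π]`, a fundamental domain of the circle of angles. -/
noncomputable def circleMeasure : Measure ℝ :=
  ENNReal.ofReal (2 * π)⁻¹ • volume.restrict (Ioc (-π) π)

lemma integral_circleMeasure {E : Type*} [NormedAddCommGroup E] [NormedSpace ℝ E] (f : ℝ → E) :
    ∫ φ, f φ ∂circleMeasure = (2 * π)⁻¹ • ∫ φ in (-π)..π, f φ := by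
  rw [circleMeasure, integral_smul_measure, ENNReal.toReal_ofReal (by positivity),
    intervalIntegral.integral_of_le (by linarith [pi_pos])]

instance : IsProbabilityMeasure circleMeasure := by
  refine ⟨?_⟩
  rw [circleMeasure, Measure.smul_apply, Measure.restrict_apply_univ, Real.volume_Ioc, smul_eq_mul,
    ← ENNReal.ofReal_mul (by positivity), sub_neg_eq_add, ← two_mul,
    inv_mul_cancel₀ two_pi_pos.ne', ENNReal.ofReal_one]

lemma ae_norm_le_pi_circleMeasure : ∀ᵐ φ ∂circleMeasure, ‖φ‖ ≤ π :=
  Measure.ae_smul_measure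
    ((ae_restrict_mem measurableSet_Ioc).mono fun _ h => abs_le.2 ⟨h.1.le, h.2⟩) _

lemma integrable_circleMeasure {E : Type*} [NormedAddCommGroup E] {f : ℝ → E}
    (hf : Continuous f) : Integrable f circleMeasure :=
  integrable_of_ae_norm_le ae_norm_le_pi_circleMeasure hf

/-- The uniform probability measure on the torus of angles indexed by `ι`. -/
noncomputable def torusMeasure (ι : Type*) [Fintype ι] : Measure (ι → ℝ) :=
  Measure.pi fun _ => circleMeasure

variable {ι : Type*} [Fintype ι]

instance : IsProbabilityMeasure (torusMeasure ι) := by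
  unfold torusMeasure
  infer_instance

lemma ae_norm_le_pi_torusMeasure : ∀ᵐ θ ∂torusMeasure ι, ‖θ‖ ≤ π := by
  simp only [pi_norm_le_iff_of_nonneg pi_nonneg]
  exact ae_all_iff.2 fun k =>
    (Measure.tendsto_eval_ae_ae (μ := fun _ : ι => circleMeasure) (i := k)).eventually
      ae_norm_le_pi_circleMeasure

lemma integrable_torusMeasure {E : Type*} [NormedAddCommGroup E] {f : (ι → ℝ) → E}
    (hf : Continuous f) : Integrable f (torusMeasure ι) :=
  integrable_of_ae_norm_le ae_norm_le_pi_torusMeasure hf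

lemma integral_torusMeasure_snoc {E : Type*} [NormedAddCommGroup E] [NormedSpace ℝ E] {e : ℕ}
    {f : (Fin (e + 1) → ℝ) → E} (hf : Continuous f) :
    ∫ θ, f θ ∂torusMeasure (Fin (e + 1)) =
      ∫ θ, ∫ φ, f (Fin.snoc θ φ) ∂circleMeasure ∂torusMeasure (Fin e) := by
  have hmp : MeasurePreserving (MeasurableEquiv.piFinSuccAbove (fun _ => ℝ) (Fin.last e)).symm
      (circleMeasure.prod (torusMeasure (Fin e))) (torusMeasure (Fin (e + 1))) :=
    (measurePreserving_piFinSuccAbove (fun _ => circleMeasure) (Fin.last e)).symm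
  have hint := (hmp.integrable_comp_emb (MeasurableEquiv.measurableEmbedding _)).2
    (integrable_torusMeasure hf)
  rw [← hmp.integral_comp']
  refine (integral_prod_symm _ hint).trans ?_
  simp [MeasurableEquiv.piFinSuccAbove, Fin.insertNthEquiv, Fin.insertNth_last']

lemma integral_torusMeasure_prod {𝕜 : Type*} [RCLike 𝕜] (f : ι → ℝ → 𝕜) :
    ∫ θ, ∏ k, f k (θ k) ∂torusMeasure ι = ∏ k, ∫ φ, f k φ ∂circleMeasure :=
  integral_fintype_prod_eq_prod f

end Measures

/-! ### Fourier representation of half-line walks -/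

section Fourier

open MeasureTheory Real

lemma integral_exp_neg_int_mul (m : ℤ) :
    ∫ φ : ℝ, Complex.exp (-(m * φ * Complex.I)) ∂circleMeasure = if m = 0 then 1 else 0 := by
  split_ifs with h
  · simp [h]
  · have hc : (-(m * Complex.I) : ℂ) ≠ 0 := by simp [h]
    have hperiod : Complex.exp (-(m * Complex.I) * (π : ℝ)) =
        Complex.exp (-(m * Complex.I) * ((-π : ℝ) : ℂ)) := by
      rw [Complex.exp_eq_exp_iff_exists_int]
      refine ⟨-m, ?_⟩
      push_cast
      ring
    have hintegral := integral_exp_mul_complex (a := -π) (b := π) hc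
    rw [hperiod, sub_self, zero_div] at hintegral
    rw [integral_circleMeasure, smul_eq_zero, ← hintegral]
    exact .inr (by congr! 3; ring)

/-- The step polynomial `b * y + q + a / y` on the circle `y = ρ * exp (φ * I)` of radius `ρ`. -/
noncomputable def tiltedSymbol (a b q ρ φ : ℝ) : ℂ :=
  q + ρ * b * Complex.exp (φ * Complex.I) + a / ρ * Complex.exp (-(φ * Complex.I))

lemma continuous_tiltedSymbol {X : Type*} [TopologicalSpace X] {a b q φ : X → ℝ}
    (ha : Continuous a) (hb : Continuous b) (hq : Continuous q) (hφ : Continuous φ) (ρ : ℝ) :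
    Continuous fun x => tiltedSymbol (a x) (b x) (q x) ρ (φ x) := by
  unfold tiltedSymbol
  fun_prop

variable (a b q : ℝ) {ρ : ℝ}

lemma integrable_exp_mul_tiltedSymbol_pow (n : ℕ) (m : ℤ) :
    Integrable (fun φ : ℝ => Complex.exp (-(m * φ * Complex.I)) * tiltedSymbol a b q ρ φ ^ n)
      circleMeasure := by
  apply integrable_circleMeasure
  unfold tiltedSymbol
  fun_prop

lemma integral_exp_mul_tiltedSymbol_pow (hρ : ρ ≠ 0) (n : ℕ) (m : ℤ) :
    ∫ φ : ℝ, Complex.exp (-(m * φ * Complex.I)) * tiltedSymbol a b q ρ φ ^ n ∂circleMeasure =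
      ρ ^ m * trinomialCoeff a b q n m := by
  induction n generalizing m with
  | zero =>
    simp only [pow_zero, mul_one, integral_exp_neg_int_mul, trinomialCoeff]
    split_ifs with h <;> simp [h]
  | succ n ih =>
    let F (m : ℤ) (φ : ℝ) : ℂ := Complex.exp (-(m * φ * Complex.I)) * tiltedSymbol a b q ρ φ ^ n
    have hF (m : ℤ) : Integrable (F m) circleMeasure :=
      integrable_exp_mul_tiltedSymbol_pow a b q n m
    have hstep (φ : ℝ) : Complex.exp (-(m * φ * Complex.I)) * tiltedSymbol a b q ρ φ ^ (n + 1) =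
        ρ * b * F (m - 1) φ + q * F m φ + a / ρ * F (m + 1) φ := by
      have hl : Complex.exp (-((m - 1 : ℤ) * φ * Complex.I)) =
          Complex.exp (-(m * φ * Complex.I)) * Complex.exp (φ * Complex.I) := by
        rw [← Complex.exp_add]
        push_cast
        ring_nf
      have hr : Complex.exp (-((m + 1 : ℤ) * φ * Complex.I)) =
          Complex.exp (-(m * φ * Complex.I)) * Complex.exp (-(φ * Complex.I)) := by
        rw [← Complex.exp_add]
        push_cast
        ring_nf
      simp only [F, hl, hr, pow_succ, tiltedSymbol]
      ring
    have hρ' : (ρ : ℂ) ≠ 0 := by exact_mod_cast hρ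
    simp_rw [hstep]
    rw [integral_add (((hF _).const_mul _).fun_add ((hF _).const_mul _)) ((hF _).const_mul _),
      integral_add ((hF _).const_mul _) ((hF _).const_mul _)]
    simp only [integral_const_mul, F, ih, trinomialCoeff_succ, zpow_sub_one₀ hρ', zpow_add_one₀ hρ']
    push_cast
    field_simp

/-- The sum of the series `∑ k * (r * exp (-φ * I)) ^ k`, the generating function of the
coefficients that extract half-line counts from trinomial coefficients. -/
noncomputable def halfLineKernel (r φ : ℝ) : ℂ :=
  r * Complex.exp (-(φ * Complex.I)) / (1 - r * Complex.exp (-(φ * Complex.I))) ^ 2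

lemma norm_ofReal_mul_exp_neg_mul_I {r : ℝ} (hr0 : 0 ≤ r) (φ : ℝ) :
    ‖(r : ℂ) * Complex.exp (-(φ * Complex.I))‖ = r := by
  rw [norm_mul, Complex.norm_real, norm_of_nonneg hr0, ← neg_mul, ← Complex.ofReal_neg,
    Complex.norm_exp_ofReal_mul_I, mul_one]

variable {r : ℝ}

lemma hasSum_halfLineKernel (hr0 : 0 ≤ r) (hr1 : r < 1) (φ : ℝ) :
    HasSum (fun k : ℕ => ((k * r ^ k : ℝ) : ℂ) * Complex.exp (-(k * φ * Complex.I)))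
      (halfLineKernel r φ) := by
  have h := hasSum_coe_mul_geometric_of_norm_lt_one (𝕜 := ℂ)
    ((norm_ofReal_mul_exp_neg_mul_I hr0 φ).trans_lt hr1)
  have hterm (k : ℕ) : ((k * r ^ k : ℝ) : ℂ) * Complex.exp (-(k * φ * Complex.I)) =
      k * (r * Complex.exp (-(φ * Complex.I))) ^ k := by
    rw [mul_pow, ← Complex.exp_nat_mul]
    push_cast
    ring_nf
  simp only [hterm]
  exact h

lemma norm_halfLineKernel_le (hr0 : 0 ≤ r) (hr1 : r < 1) (φ : ℝ) :
    ‖halfLineKernel r φ‖ ≤ r / (1 - r) ^ 2 := by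
  have hr : ‖r‖ < 1 := by rwa [norm_of_nonneg hr0]
  refine (hasSum_halfLineKernel hr0 hr1 φ).norm_le_of_bounded
    (hasSum_coe_mul_geometric_of_norm_lt_one hr) fun k => ?_
  have hexp : ‖Complex.exp (-(k * φ * Complex.I))‖ = 1 := by
    simpa using norm_ofReal_mul_exp_neg_mul_I zero_le_one (k * φ)
  rw [norm_mul, hexp, mul_one, Complex.norm_real, norm_of_nonneg (by positivity)]

lemma abs_re_halfLineKernel_sub_le (hr0 : 0 ≤ r) (hr1 : r < 1) (φ : ℝ) :
    |(halfLineKernel r φ).re - r / (1 - r) ^ 2| ≤ (∑' k : ℕ, k ^ 3 * r ^ k) * φ ^ 2 := by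
  have hr : ‖r‖ < 1 := by rwa [norm_of_nonneg hr0]
  have hre := (Complex.hasSum_re (hasSum_halfLineKernel hr0 hr1 φ)).sub
    (hasSum_coe_mul_geometric_of_norm_lt_one hr)
  refine hre.norm_le_of_bounded
    ((summable_pow_mul_geometric_of_norm_lt_one 3 hr).hasSum.mul_right _) fun k => ?_
  have hcos : |cos (k * φ) - 1| ≤ (k * φ) ^ 2 := by
    rw [abs_sub_comm, abs_of_nonneg (by linarith [cos_le_one (k * φ)])]
    linarith [one_sub_sq_div_two_le_cos (x := k * φ), sq_nonneg (k * φ)]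
  calc _ = k * r ^ k * |cos (k * φ) - 1| := by
        rw [Complex.re_ofReal_mul, ← neg_mul, ← Complex.ofReal_natCast, ← Complex.ofReal_mul,
          ← Complex.ofReal_neg, Complex.exp_ofReal_mul_I_re, cos_neg, ← mul_sub_one, norm_mul,
          norm_of_nonneg (by positivity), norm_eq_abs]
    _ ≤ k * r ^ k * (k * φ) ^ 2 := by gcongr
    _ = _ := by ring

lemma abs_im_halfLineKernel_le (hr0 : 0 ≤ r) (hr1 : r < 1) (φ : ℝ) :
    |(halfLineKernel r φ).im| ≤ (∑' k : ℕ, k ^ 2 * r ^ k) * |φ| := by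
  have hr : ‖r‖ < 1 := by rwa [norm_of_nonneg hr0]
  refine (Complex.hasSum_im (hasSum_halfLineKernel hr0 hr1 φ)).norm_le_of_bounded
    ((summable_pow_mul_geometric_of_norm_lt_one 2 hr).hasSum.mul_right _) fun k => ?_
  calc _ = k * r ^ k * |sin (k * φ)| := by
        rw [Complex.im_ofReal_mul, ← neg_mul, ← Complex.ofReal_natCast, ← Complex.ofReal_mul,
          ← Complex.ofReal_neg, Complex.exp_ofReal_mul_I_im, sin_neg, norm_mul, norm_neg,
          norm_of_nonneg (by positivity), norm_eq_abs]
    _ ≤ k * r ^ k * |k * φ| := mul_le_mul_of_nonneg_left abs_sin_le_abs (by positivity)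
    _ = _ := by
        rw [abs_mul, Nat.abs_cast]
        ring

lemma continuous_halfLineKernel (hr0 : 0 ≤ r) (hr1 : r < 1) : Continuous (halfLineKernel r) := by
  unfold halfLineKernel
  refine Continuous.div (by fun_prop) (by fun_prop) fun φ => pow_ne_zero 2 fun h => ?_
  have := norm_ofReal_mul_exp_neg_mul_I hr0 φ
  rw [← sub_eq_zero.1 h, norm_one] at this
  linarith

lemma hasSum_mul_trinomialCoeff (hρ : 1 < ρ) (n : ℕ) :
    HasSum (fun k : ℕ => ((k * trinomialCoeff a b q n k : ℝ) : ℂ))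
      (∫ φ, halfLineKernel ρ⁻¹ φ * tiltedSymbol a b q ρ φ ^ n ∂circleMeasure) := by
  have hρ0 : 0 < ρ := one_pos.trans hρ
  have hr1 : ρ⁻¹ < 1 := inv_lt_one_of_one_lt₀ hρ
  let E (k : ℕ) (φ : ℝ) : ℂ := Complex.exp (-(k * φ * Complex.I)) * tiltedSymbol a b q ρ φ ^ n
  have hE (k : ℕ) : Integrable (E k) circleMeasure := by
    simpa only [Int.cast_natCast] using integrable_exp_mul_tiltedSymbol_pow a b q n k
  have hnorm (k : ℕ) (φ : ℝ) : ‖((k * ρ⁻¹ ^ k : ℝ) : ℂ) * E k φ‖ =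
      k * ρ⁻¹ ^ k * ‖tiltedSymbol a b q ρ φ ^ n‖ := by
    have hexp : ‖Complex.exp (-(k * φ * Complex.I))‖ = 1 := by
      simpa using norm_ofReal_mul_exp_neg_mul_I zero_le_one (k * φ)
    rw [norm_mul, norm_mul, hexp, one_mul, Complex.norm_real, norm_of_nonneg (by positivity)]
  have hsummable : Summable fun k : ℕ => ∫ φ, ‖((k * ρ⁻¹ ^ k : ℝ) : ℂ) * E k φ‖ ∂circleMeasure := by
    have hr : ‖ρ⁻¹‖ < 1 := by rwa [norm_of_nonneg (by positivity)]
    simp only [hnorm, integral_const_mul]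
    exact (hasSum_coe_mul_geometric_of_norm_lt_one hr).summable.mul_right _
  have hterm (k : ℕ) : ∫ φ, ((k * ρ⁻¹ ^ k : ℝ) : ℂ) * E k φ ∂circleMeasure =
      ((k * trinomialCoeff a b q n k : ℝ) : ℂ) := by
    have hρ' : (ρ : ℂ) ≠ 0 := by exact_mod_cast hρ0.ne'
    have hcoeff := integral_exp_mul_tiltedSymbol_pow a b q hρ0.ne' n k
    simp only [Int.cast_natCast, zpow_natCast] at hcoeff
    have hinv : (ρ : ℂ)⁻¹ ^ k * ρ ^ k = 1 := by rw [← mul_pow, inv_mul_cancel₀ hρ', one_pow]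
    rw [integral_const_mul, hcoeff]
    push_cast
    linear_combination k * (trinomialCoeff a b q n k : ℝ) * hinv
  have hsum (φ : ℝ) : ∑' k : ℕ, ((k * ρ⁻¹ ^ k : ℝ) : ℂ) * E k φ =
      halfLineKernel ρ⁻¹ φ * tiltedSymbol a b q ρ φ ^ n := by
    rw [← (hasSum_halfLineKernel (inv_nonneg.2 hρ0.le) hr1 φ).tsum_eq, ← tsum_mul_right]
    simp only [E, mul_assoc]
  have hkey := hasSum_integral_of_summable_integral_norm
    (fun k : ℕ => (hE k).const_mul ((k * ρ⁻¹ ^ k : ℝ) : ℂ)) hsummable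
  simpa only [hsum, hterm] using hkey

lemma mul_halfLineCount_zero_eq_integral (hρ : 1 < ρ) (n : ℕ) :
    b * (n + 1) * halfLineCount a b q n 0 =
      ∫ φ, (halfLineKernel ρ⁻¹ φ * tiltedSymbol a b q ρ φ ^ (n + 1)).re ∂circleMeasure := by
  have hr0 : 0 ≤ ρ⁻¹ := inv_nonneg.2 (one_pos.trans hρ).le
  have hcont : Continuous fun φ => halfLineKernel ρ⁻¹ φ * tiltedSymbol a b q ρ φ ^ (n + 1) :=
    (continuous_halfLineKernel hr0 (inv_lt_one_of_one_lt₀ hρ)).mul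
      ((continuous_tiltedSymbol continuous_const continuous_const continuous_const
        continuous_id _).pow _)
  have hre := Complex.reCLM.integral_comp_comm (integrable_circleMeasure hcont)
  have hzero : ∀ k ∉ range (n + 2), ((k * trinomialCoeff a b q (n + 1) k : ℝ) : ℂ) = 0 := by
    intro k hk
    rw [mem_range, not_lt] at hk
    rw [trinomialCoeff_of_lt _ _ _ (by omega), mul_zero, Complex.ofReal_zero]
  simp only [Complex.reCLM_apply] at hre
  rw [mul_halfLineCount_zero, hre,
    (hasSum_mul_trinomialCoeff a b q hρ _).unique (hasSum_sum_of_ne_finset_zero hzero)]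
  norm_cast

end Fourier

/-! ### Walks in the orthant -/

section WalkCount

variable {d : ℕ} (S : Finset (Fin d → ℤ)) (w : (Fin d → ℤ) → ℝ)

/-- The weighted number of `n`-step walks that begin at `x` and whose later points all lie in the
orthant, computed by removing the first step. -/
noncomputable def walkCountFrom : ℕ → (Fin d → ℤ) → ℝ
  | 0, _ => 1
  | n + 1, x => ∑ i ∈ S, w i * if ∀ m, 0 ≤ (x + i) m then walkCountFrom n (x + i) else 0

lemma sum_Iic_succ_eq {M : Type*} [AddCommMonoid M] {n : ℕ} (v : Fin (n + 1) → M) (k : Fin n) :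
    ∑ j ∈ Iic k.succ, v j = v 0 + ∑ j ∈ Iic k, v j.succ := by
  have hsucc (m : ℕ) (l : Fin m) : Iic l = univ.filter (· ≤ l) := by ext; simp
  rw [hsucc, hsucc, sum_filter, sum_filter, Fin.sum_univ_succ]
  simp

lemma forall_nonneg_partial_sums_cons {n : ℕ} (x i : Fin d → ℤ) (u : Fin n → Fin d → ℤ) :
    (∀ k : Fin (n + 1), ∀ m, 0 ≤ x m + ∑ j ∈ Iic k, Fin.cons (α := fun _ => Fin d → ℤ) i u j m) ↔
      (∀ m, 0 ≤ (x + i) m) ∧ ∀ k : Fin n, ∀ m, 0 ≤ (x + i) m + ∑ j ∈ Iic k, u j m := by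
  have hzero : Iic (0 : Fin (n + 1)) = {0} := by ext; simp
  rw [Fin.forall_fin_succ]
  simp only [hzero, sum_singleton, sum_Iic_succ_eq, Fin.cons_zero, Fin.cons_succ, Pi.add_apply,
    add_assoc]

lemma sum_walks_eq_walkCountFrom (n : ℕ) (x : Fin d → ℤ) :
    (∑ u : Fin n → S, if ∀ k : Fin n, ∀ m, 0 ≤ x m + ∑ j ∈ Iic k, (u j : Fin d → ℤ) m
      then ∏ k, w (u k) else 0) = walkCountFrom S w n x := by
  induction n generalizing x with
  | zero => simp [walkCountFrom]
  | succ n ih =>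
    rw [← (Fin.consEquiv fun _ => (S : Type)).sum_comp, Fintype.sum_prod_type, walkCountFrom,
      ← sum_coe_sort S]
    refine sum_congr rfl fun i _ => ?_
    have hcons (u : Fin n → S) (j : Fin (n + 1)) :
        ((Fin.consEquiv (fun _ => (S : Type)) (i, u) j : S) : Fin d → ℤ) =
          Fin.cons (α := fun _ => Fin d → ℤ) i (fun j => (u j : Fin d → ℤ)) j := by
      cases j using Fin.cases <;> simp [Fin.consEquiv]
    simp only [hcons, forall_nonneg_partial_sums_cons, Fin.prod_univ_succ, Fin.cons_zero,
      Fin.cons_succ, ite_and]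
    split_ifs with h
    · rw [← ih, mul_sum]
      exact sum_congr rfl fun u _ => (mul_ite_zero _ _ _).symm
    · simp

lemma weightedWalkCount_eq_walkCountFrom (n : ℕ) :
    weightedWalkCount d S w n = walkCountFrom S w n 0 := by
  simp [weightedWalkCount, ← sum_walks_eq_walkCountFrom]

end WalkCount

/-- All steps in `S` have coordinates in `{-1, 0, 1}`. -/
def HasSmallSteps {ι : Type*} (S : Finset (ι → ℤ)) : Prop :=
  ∀ i ∈ S, ∀ k, i k = -1 ∨ i k = 0 ∨ i k = 1

lemma HasSmallSteps.sum_eq_add_add {ι M : Type*} [AddCommMonoid M] {S : Finset (ι → ℤ)}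
    (hS : HasSmallSteps S) (k : ι) (f : (ι → ℤ) → M) :
    ∑ i ∈ S, f i = ∑ i ∈ S with i k = -1, f i + ∑ i ∈ S with i k = 0, f i +
      ∑ i ∈ S with i k = 1, f i := by
  rw [← sum_fiberwise_of_maps_to (t := {-1, 0, 1}) (g := fun i => i k)
    (fun i hi => by simpa using hS i hi k)]
  simp [add_assoc]

/-- The weighting `w` of `S` is invariant under negation of the coordinate `j`. -/
def AxisSymmetric {ι R : Type*} [DecidableEq ι] (S : Finset (ι → ℤ)) (w : (ι → ℤ) → R) (j : ι) :
    Prop :=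
  ∀ i ∈ S, Function.update i j (-(i j)) ∈ S ∧ w (Function.update i j (-(i j))) = w i

section Symmetrization

variable {ι : Type*} [DecidableEq ι] {S : Finset (ι → ℤ)}

lemma AxisSymmetric.sum_mul {R : Type*} [NonUnitalNonAssocSemiring R] {w : (ι → ℤ) → R} {j : ι}
    (hj : AxisSymmetric S w j) (g : (ι → ℤ) → R) :
    ∑ i ∈ S, w i * g i = ∑ i ∈ S, w i * g (Function.update i j (-(i j))) := by
  refine sum_nbij' (fun i => Function.update i j (-(i j))) (fun i => Function.update i j (-(i j)))
    (fun i hi => (hj i hi).1) (fun i hi => (hj i hi).1) ?_ ?_ ?_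
  · simp
  · simp
  · intro i hi
    simp [(hj i hi).2]

/-- The even part of a function on the integers. A weighting that is symmetric over an axis does not
distinguish a function of that coordinate from its even part. -/
noncomputable def evenPart {K : Type*} [DivisionRing K] (f : ℤ → K) (z : ℤ) : K :=
  (f z + f (-z)) / 2

variable {K : Type*} [Field K] [CharZero K] [Fintype ι] {w : (ι → ℤ) → K}

lemma AxisSymmetric.sum_mul_prod {j : ι} (hj : AxisSymmetric S w j) (φ : ι → ℤ → K) :
    ∑ i ∈ S, w i * ∏ k, φ k (i k) =
      ∑ i ∈ S, w i * ∏ k, Function.update φ j (evenPart (φ j)) k (i k) := by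
  have hsplit (f : ℤ → K) (i : ι → ℤ) :
      ∏ k, Function.update φ j f k (i k) = f (i j) * ∏ k ∈ univ.erase j, φ k (i k) := by
    rw [← mul_prod_erase univ _ (mem_univ j), Function.update_self]
    exact congrArg _ (prod_congr rfl fun k hk => by rw [Function.update_of_ne (ne_of_mem_erase hk)])
  have hrefl (i : ι → ℤ) : ∏ k, φ k (Function.update i j (-(i j)) k) =
      φ j (-(i j)) * ∏ k ∈ univ.erase j, φ k (i k) := by
    rw [← mul_prod_erase univ _ (mem_univ j), Function.update_self]
    exact congrArg _ (prod_congr rfl fun k hk => by rw [Function.update_of_ne (ne_of_mem_erase hk)])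
  have hsum := hj.sum_mul fun i => ∏ k, φ k (i k)
  rw [← add_self_div_two (∑ i ∈ S, w i * ∏ k, φ k (i k))]
  nth_rewrite 2 [hsum]
  rw [← sum_add_distrib, sum_div]
  refine sum_congr rfl fun i _ => ?_
  rw [hrefl, hsplit, ← mul_prod_erase univ _ (mem_univ j), evenPart]
  ring

lemma sum_mul_prod_eq_of_axisSymmetric {T : Finset ι} (hT : ∀ j ∈ T, AxisSymmetric S w j)
    (φ : ι → ℤ → K) :
    ∑ i ∈ S, w i * ∏ k, φ k (i k) =
      ∑ i ∈ S, w i * ∏ k, T.piecewise (fun k => evenPart (φ k)) φ k (i k) := by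
  induction T using Finset.induction_on with
  | empty => simp
  | insert j T hj ih =>
    rw [ih fun k hk => hT k (mem_insert_of_mem hk), (hT j (mem_insert_self j T)).sum_mul_prod,
      piecewise_insert, piecewise_eq_of_notMem _ _ _ hj]

end Symmetrization

/-! ### Fourier representation of orthant walks -/

section CoordKernel

open Real MeasureTheory Polynomial

/-- The kernel `sin ((x + 1) * t) / sin t * (1 + cos t)` of a non-negative coordinate subject to
symmetric steps. It vanishes at `x = -1`, which encodes the wall, and has mean `1` in `t` for all
`x ≥ 0`, so that integrating against it sums over the end point of the coordinate. -/
noncomputable def coordKernel (x : ℤ) (t : ℝ) : ℝ :=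
  (Chebyshev.U ℝ x).eval (cos t) * (1 + cos t)

lemma coordKernel_neg_one (t : ℝ) : coordKernel (-1) t = 0 := by simp [coordKernel]

lemma coordKernel_zero (t : ℝ) : coordKernel 0 t = 1 + cos t := by simp [coordKernel]

lemma continuous_coordKernel (x : ℤ) : Continuous (coordKernel x) :=
  ((Polynomial.continuous _).comp continuous_cos).mul (by fun_prop)

lemma evenPart_coordKernel (x : ℤ) {z : ℤ} (hz : z = -1 ∨ z = 0 ∨ z = 1) (t : ℝ) :
    evenPart (fun z => coordKernel (x + z) t) z = cos (z * t) * coordKernel x t := by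
  have h := congrArg (eval (cos t)) (Chebyshev.U_add_one ℝ x)
  simp only [eval_sub, eval_mul, eval_X, eval_ofNat] at h
  rcases hz with rfl | rfl | rfl <;>
    simp only [evenPart, coordKernel, neg_neg, neg_zero, add_zero, h, ← sub_eq_add_neg] <;>
    push_cast <;> simp <;> ring

lemma coordKernel_add_one_sub (x : ℤ) (t : ℝ) :
    coordKernel (x + 1) t - coordKernel x t =
      cos ((x + 1 : ℤ) * t) + cos ((x + 2 : ℤ) * t) := by
  have hU := congrArg (eval (cos t)) (Chebyshev.U_eq_X_mul_U_add_T ℝ x)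
  have hT := congrArg (eval (cos t)) (Chebyshev.T_eq_X_mul_T_sub_pol_U ℝ x)
  simp only [eval_sub, eval_mul, eval_X, eval_add, eval_one, eval_pow,
    Chebyshev.T_real_cos] at hU hT
  rw [coordKernel, coordKernel, hU, hT]
  ring

lemma integral_cos_int_mul {m : ℤ} (hm : m ≠ 0) : ∫ t, cos (m * t) ∂circleMeasure = 0 := by
  rw [integral_circleMeasure,
    intervalIntegral.integral_comp_mul_left (fun t => cos t) (by exact_mod_cast hm)]
  simp [sin_int_mul_pi]

lemma integral_coordKernel (x : ℕ) : ∫ t, coordKernel x t ∂circleMeasure = 1 := by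
  induction x with
  | zero =>
    have hcos := integral_cos_int_mul one_ne_zero
    simp only [Int.cast_one, one_mul] at hcos
    simp only [Nat.cast_zero, coordKernel_zero]
    rw [integral_add (integrable_const 1) (integrable_circleMeasure continuous_cos), hcos]
    simp
  | succ x ih =>
    have hcos (m : ℤ) : Integrable (fun t => cos (m * t)) circleMeasure :=
      integrable_circleMeasure (by fun_prop)
    have hdiff := integral_sub (integrable_circleMeasure (continuous_coordKernel (x + 1)))
      (integrable_circleMeasure (continuous_coordKernel x))
    simp only [coordKernel_add_one_sub, ih] at hdiff
    rw [integral_add (hcos _) (hcos _), integral_cos_int_mul (by omega),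
      integral_cos_int_mul (by omega)] at hdiff
    push_cast
    linarith

end CoordKernel

section OrthantKernel

open Real MeasureTheory

variable {e : ℕ} (S : Finset (Fin (e + 1) → ℤ)) (w : (Fin (e + 1) → ℤ) → ℝ)

/-- The Fourier transform, in all coordinates but the last one, of the steps with last coordinate
`ε`: the quantities `A`, `Q`, `B` of the paper on the torus, for `ε = -1, 0, 1`. -/
noncomputable def sliceTransform (ε : ℤ) (θ : Fin e → ℝ) : ℝ :=
  ∑ i ∈ S with i (Fin.last e) = ε, w i * ∏ k, cos (i k.castSucc * θ k)

lemma continuous_sliceTransform (ε : ℤ) : Continuous (sliceTransform S w ε) := by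
  unfold sliceTransform
  fun_prop

/-- The number of walks of length `n` in the half space `0 ≤ i (Fin.last e)`, as a Fourier
transform in the remaining coordinates. -/
noncomputable def sliceCount (n : ℕ) (θ : Fin e → ℝ) : ℝ :=
  halfLineCount (sliceTransform S w (-1) θ) (sliceTransform S w 1 θ) (sliceTransform S w 0 θ) n 0

lemma continuous_sliceCount (n : ℕ) : Continuous (sliceCount S w n) :=
  continuous_halfLineCount (continuous_sliceTransform S w _) (continuous_sliceTransform S w _)
    (continuous_sliceTransform S w _) n 0

/-- The integrand that represents `walkCountFrom S w n x` as an integral over the torus. -/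
noncomputable def orthantKernel (n : ℕ) (x : Fin (e + 1) → ℤ) (θ : Fin e → ℝ) : ℝ :=
  (∏ k, coordKernel (x k.castSucc) (θ k)) *
    halfLineCount (sliceTransform S w (-1) θ) (sliceTransform S w 1 θ) (sliceTransform S w 0 θ) n
      (x (Fin.last e))

lemma continuous_orthantKernel (n : ℕ) (x : Fin (e + 1) → ℤ) :
    Continuous (orthantKernel S w n x) :=
  (continuous_finsetProd _ fun k _ => (continuous_coordKernel _).comp (continuous_apply k)).mul
    (continuous_halfLineCount (continuous_sliceTransform S w _) (continuous_sliceTransform S w _)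
      (continuous_sliceTransform S w _) n _)

lemma orthantKernel_eq_zero (n : ℕ) {x : Fin (e + 1) → ℤ} {m : Fin (e + 1)} (hm : x m = -1)
    (θ : Fin e → ℝ) : orthantKernel S w n x θ = 0 := by
  rw [orthantKernel]
  cases m using Fin.lastCases with
  | last => rw [halfLineCount_of_neg _ _ _ _ (by omega), mul_zero]
  | cast k =>
    rw [prod_eq_zero (mem_univ k) (by rw [hm, coordKernel_neg_one]), zero_mul]

lemma integral_orthantKernel_zero {x : Fin (e + 1) → ℤ} (hx : ∀ m, 0 ≤ x m) :
    ∫ θ, orthantKernel S w 0 x θ ∂torusMeasure (Fin e) = 1 := by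
  simp only [orthantKernel, halfLineCount, if_pos (hx _), mul_one]
  rw [integral_torusMeasure_prod fun (k : Fin e) t => coordKernel (x k.castSucc) t]
  refine prod_eq_one fun k _ => ?_
  obtain ⟨m, hm⟩ := Int.eq_ofNat_of_zero_le (hx k.castSucc)
  rw [hm, integral_coordKernel]

variable {S w}

lemma sum_mul_orthantKernel_add (hS : HasSmallSteps S)
    (hsym : ∀ j : Fin e, AxisSymmetric S w j.castSucc) (n : ℕ) {x : Fin (e + 1) → ℤ}
    (hx : 0 ≤ x (Fin.last e)) (θ : Fin e → ℝ) :
    ∑ i ∈ S, w i * orthantKernel S w n (x + i) θ = orthantKernel S w (n + 1) x θ := by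
  let G (z : ℤ) : ℝ := halfLineCount (sliceTransform S w (-1) θ) (sliceTransform S w 1 θ)
    (sliceTransform S w 0 θ) n (x (Fin.last e) + z)
  let φ : Fin (e + 1) → ℤ → ℝ :=
    Fin.snoc (α := fun _ => ℤ → ℝ) (fun k z => coordKernel (x k.castSucc + z) (θ k)) G
  have hT : ∀ j ∈ ({Fin.last e}ᶜ : Finset (Fin (e + 1))), AxisSymmetric S w j := by
    intro j hj
    obtain ⟨k, rfl⟩ := Fin.exists_castSucc_eq.2 (by simpa using hj)
    exact hsym k
  have hslice (ε : ℤ) : ∑ i ∈ S with i (Fin.last e) = ε,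
      w i * ((∏ k, cos (i k.castSucc * θ k)) * G (i (Fin.last e))) =
        sliceTransform S w ε θ * G ε := by
    rw [sliceTransform, sum_mul]
    refine sum_congr rfl fun i hi => ?_
    rw [(mem_filter.1 hi).2, mul_assoc]
  calc ∑ i ∈ S, w i * orthantKernel S w n (x + i) θ = ∑ i ∈ S, w i * ∏ k, φ k (i k) := by
        simp [orthantKernel, φ, G, Fin.prod_univ_castSucc]
    _ = ∑ i ∈ S, (∏ k, coordKernel (x k.castSucc) (θ k)) *
          (w i * ((∏ k, cos (i k.castSucc * θ k)) * G (i (Fin.last e)))) := by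
        rw [sum_mul_prod_eq_of_axisSymmetric hT]
        refine sum_congr rfl fun i hi => ?_
        simp only [Fin.prod_univ_castSucc, piecewise, mem_compl, mem_singleton,
          Fin.castSucc_ne_last, not_false_eq_true, not_true_eq_false, if_true, if_false, φ,
          Fin.snoc_castSucc, Fin.snoc_last, evenPart_coordKernel _ (hS i hi _), prod_mul_distrib]
        ring
    _ = orthantKernel S w (n + 1) x θ := by
        rw [← mul_sum, hS.sum_eq_add_add (Fin.last e), hslice, hslice, hslice, orthantKernel,
          halfLineCount, if_pos hx]
        simp only [G, add_zero, ← sub_eq_add_neg]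
        ring

lemma walkCountFrom_eq_integral (hS : HasSmallSteps S)
    (hsym : ∀ j : Fin e, AxisSymmetric S w j.castSucc) (n : ℕ) {x : Fin (e + 1) → ℤ}
    (hx : ∀ m, 0 ≤ x m) :
    walkCountFrom S w n x = ∫ θ, orthantKernel S w n x θ ∂torusMeasure (Fin e) := by
  induction n generalizing x with
  | zero => rw [walkCountFrom, integral_orthantKernel_zero S w hx]
  | succ n ih =>
    simp only [walkCountFrom, ← sum_mul_orthantKernel_add hS hsym n (hx _)]
    rw [integral_finsetSum _ fun i _ =>
      (integrable_torusMeasure (continuous_orthantKernel S w n (x + i))).const_mul _]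
    refine sum_congr rfl fun i hi => ?_
    rw [integral_const_mul]
    split_ifs with h
    · rw [ih h]
    · push Not at h
      obtain ⟨m, hm⟩ := h
      have hm' : (x + i) m = -1 := by
        have := hx m
        rcases hS i hi m with h | h | h <;> simp only [Pi.add_apply, h] at hm ⊢ <;> omega
      simp [orthantKernel_eq_zero S w n hm']

lemma weightedWalkCount_eq_integral (hS : HasSmallSteps S)
    (hsym : ∀ j : Fin e, AxisSymmetric S w j.castSucc) (n : ℕ) :
    weightedWalkCount (e + 1) S w n =
      ∫ θ, (∏ k, (1 + cos (θ k))) * sliceCount S w n θ ∂torusMeasure (Fin e) := by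
  rw [weightedWalkCount_eq_walkCountFrom,
    walkCountFrom_eq_integral hS hsym n (x := 0) fun _ => le_rfl]
  simp [orthantKernel, sliceCount, coordKernel_zero]

end OrthantKernel

/-! ### Gaussian integrals over the torus -/

section Gaussian

open Real MeasureTheory Asymptotics Filter Topology

lemma sq_le_three_mul_sin_sq {t : ℝ} (ht : |t| ≤ π / 2) : t ^ 2 ≤ 3 * sin t ^ 2 := by
  have hconst : 1 ≤ 3 * (2 / π) ^ 2 := by
    rw [div_pow, ← mul_div_assoc, one_le_div (by positivity)]
    nlinarith [pi_lt_d2, pi_pos]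
  calc t ^ 2 ≤ 3 * (2 / π) ^ 2 * t ^ 2 := le_mul_of_one_le_left (sq_nonneg t) hconst
    _ = 3 * (2 / π * |t|) ^ 2 := by rw [mul_pow, sq_abs, mul_assoc]
    _ ≤ 3 * |sin t| ^ 2 := by gcongr; exact mul_abs_le_abs_sin ht
    _ = 3 * sin t ^ 2 := by rw [sq_abs]

lemma exp_neg_le_inv {x : ℝ} (hx : 0 < x) : exp (-x) ≤ x⁻¹ := by
  rw [exp_neg]
  exact inv_anti₀ hx (by linarith [add_one_le_exp x])

lemma abs_integral_exp_neg_mul_sq_sub_le {b : ℝ} (hb : 0 < b) :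
    |(∫ t in (-π)..π, exp (-b * t ^ 2)) - √(π / b)| ≤ 2 / b * √(2 * π / b) := by
  have hπ : -π ≤ π := by linarith [pi_pos]
  have hint := integrable_exp_neg_mul_sq hb
  have hint2 := (integrable_exp_neg_mul_sq (half_pos hb)).const_mul (2 / b)
  have htail : ∀ t ∈ (Set.Ioc (-π) π)ᶜ, exp (-b * t ^ 2) ≤ 2 / b * exp (-(b / 2) * t ^ 2) := by
    intro t ht
    have ht1 : 1 ≤ t ^ 2 := by
      rw [Set.mem_compl_iff, Set.mem_Ioc, not_and_or, not_lt, not_le] at ht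
      rcases ht with h | h <;> nlinarith [pi_gt_three]
    calc exp (-b * t ^ 2) = exp (-(b / 2 * t ^ 2)) * exp (-(b / 2) * t ^ 2) := by
          rw [← exp_add]
          congr 1
          ring
      _ ≤ exp (-(b / 2)) * exp (-(b / 2) * t ^ 2) := by
          gcongr
          exact le_mul_of_one_le_right (half_pos hb).le ht1
      _ ≤ (b / 2)⁻¹ * exp (-(b / 2) * t ^ 2) := by
          gcongr
          exact exp_neg_le_inv (half_pos hb)
      _ = 2 / b * exp (-(b / 2) * t ^ 2) := by rw [inv_div]
  have hsplit := integral_add_compl (measurableSet_Ioc (a := -π) (b := π)) hint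
  rw [integral_gaussian] at hsplit
  rw [intervalIntegral.integral_of_le hπ, ← hsplit, sub_add_cancel_left, abs_neg,
    abs_of_nonneg (integral_nonneg fun t => (exp_pos _).le)]
  calc ∫ t in (Set.Ioc (-π) π)ᶜ, exp (-b * t ^ 2)
      ≤ ∫ t in (Set.Ioc (-π) π)ᶜ, 2 / b * exp (-(b / 2) * t ^ 2) :=
        setIntegral_mono_on hint.integrableOn hint2.integrableOn measurableSet_Ioc.compl htail
    _ ≤ ∫ t, 2 / b * exp (-(b / 2) * t ^ 2) :=
        setIntegral_le_integral hint2 (Eventually.of_forall fun t => by positivity)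
    _ = 2 / b * √(2 * π / b) := by
        rw [integral_const_mul, integral_gaussian]
        congr 2
        field_simp

lemma isBigO_sqrt_mul_integral_exp_neg_mul_sq {σ : ℝ} (hσ : 0 < σ) :
    (fun N : ℕ => √N * ∫ t, exp (-(σ * t ^ 2 / 2)) ^ N ∂circleMeasure - (√(2 * π * σ))⁻¹) =O[atTop]
      fun N : ℕ => (N : ℝ)⁻¹ := by
  refine IsBigO.of_bound ((2 * π)⁻¹ * (4 / σ * √(4 * π / σ))) ?_
  filter_upwards [eventually_gt_atTop 0] with N hN
  have hN0 : (0 : ℝ) < N := Nat.cast_pos.2 hN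
  have hb : 0 < N * σ / 2 := by positivity
  have hpow (t : ℝ) : exp (-(σ * t ^ 2 / 2)) ^ N = exp (-(N * σ / 2) * t ^ 2) := by
    rw [← exp_nat_mul]
    congr 1
    ring
  have hmain : (√(2 * π * σ))⁻¹ = √N * ((2 * π)⁻¹ * √(π / (N * σ / 2))) := by
    rw [← sqrt_inv, mul_left_comm, ← sqrt_mul hN0.le,
      ← sqrt_sq (show 0 ≤ (2 * π)⁻¹ by positivity), ← sqrt_mul (by positivity)]
    congr 1
    field_simp
  have herror : √N * √(2 * π / (N * σ / 2)) = √(4 * π / σ) := by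
    rw [← sqrt_mul hN0.le]
    congr 1
    field_simp
    ring
  simp only [hpow]
  rw [integral_circleMeasure, smul_eq_mul, hmain, ← mul_sub, ← mul_sub, norm_mul, norm_mul,
    norm_of_nonneg (sqrt_nonneg _), norm_of_nonneg (show 0 ≤ (2 * π)⁻¹ by positivity),
    norm_of_nonneg (inv_nonneg.2 hN0.le)]
  calc √N * ((2 * π)⁻¹ * |(∫ t in (-π)..π, exp (-(N * σ / 2) * t ^ 2)) - √(π / (N * σ / 2))|)
      ≤ √N * ((2 * π)⁻¹ * (2 / (N * σ / 2) * √(2 * π / (N * σ / 2)))) := by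
        gcongr
        exact abs_integral_exp_neg_mul_sq_sub_le hb
    _ = (2 * π)⁻¹ * (2 / (N * σ / 2) * (√N * √(2 * π / (N * σ / 2)))) := by ring
    _ = (2 * π)⁻¹ * (4 / σ * √(4 * π / σ)) * (N : ℝ)⁻¹ := by
        rw [herror]
        field_simp
        ring

lemma integral_exp_neg_mul_sin_sq_le {x : ℝ} (hx : 0 < x) :
    ∫ t, exp (-(x * sin t ^ 2)) ∂circleMeasure ≤ √(3 * π) / √x := by
  have hcont : Continuous fun t => exp (-(x * sin t ^ 2)) := by fun_prop
  have hper : Function.Periodic (fun t => exp (-(x * sin t ^ 2))) π := fun t => by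
    simp only [sin_add_pi, neg_sq]
  have hhalf : ∫ t in (-(π / 2))..(π / 2), exp (-(x * sin t ^ 2)) ≤ √(3 * π) / √x := by
    rw [intervalIntegral.integral_of_le (by linarith [pi_pos])]
    calc ∫ t in Set.Ioc (-(π / 2)) (π / 2), exp (-(x * sin t ^ 2))
        ≤ ∫ t in Set.Ioc (-(π / 2)) (π / 2), exp (-(x / 3) * t ^ 2) := by
          refine setIntegral_mono_on hcont.integrableOn_Ioc
            (integrable_exp_neg_mul_sq (by positivity)).integrableOn measurableSet_Ioc
            fun t ht => exp_le_exp.2 ?_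
          nlinarith [sq_le_three_mul_sin_sq (abs_le.2 ⟨ht.1.le, ht.2⟩)]
      _ ≤ ∫ t, exp (-(x / 3) * t ^ 2) :=
          setIntegral_le_integral (integrable_exp_neg_mul_sq (by positivity))
            (Eventually.of_forall fun t => (exp_pos _).le)
      _ = √(3 * π) / √x := by
          rw [integral_gaussian, ← sqrt_div (by positivity)]
          congr 1
          field_simp
  have hleft := hper.intervalIntegral_add_eq (-π) (-(π / 2))
  have hright := hper.intervalIntegral_add_eq 0 (-(π / 2))
  rw [neg_add_cancel, show -(π / 2) + π = π / 2 by ring] at hleft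
  rw [zero_add, show -(π / 2) + π = π / 2 by ring] at hright
  rw [integral_circleMeasure, ← intervalIntegral.integral_add_adjacent_intervals
    (hcont.intervalIntegrable _ 0) (hcont.intervalIntegrable _ _), hleft, hright, ← two_mul,
    smul_eq_mul, ← mul_assoc]
  refine (mul_le_of_le_one_left ?_ ?_).trans hhalf
  · exact intervalIntegral.integral_nonneg (by linarith [pi_pos]) fun t _ => (exp_pos _).le
  · rw [mul_inv, mul_right_comm, inv_mul_cancel₀ two_ne_zero, one_mul]
    exact inv_le_one_of_one_le₀ (by linarith [pi_gt_three])

lemma isBigO_mul_sub_mul {α R : Type*} [SeminormedRing R] {l : Filter α}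
    {f₁ f₂ : α → R} {a₁ a₂ : R} {g : α → ℝ} (h₁ : (fun x => f₁ x - a₁) =O[l] g)
    (h₂ : (fun x => f₂ x - a₂) =O[l] g) (hg : g =O[l] fun _ => (1 : ℝ)) :
    (fun x => f₁ x * f₂ x - a₁ * a₂) =O[l] g := by
  have hbdd : f₁ =O[l] fun _ => (1 : ℝ) := by
    simpa using (h₁.trans hg).add (isBigO_const_const a₁ one_ne_zero l)
  have hright := hbdd.mul h₂
  have hleft := h₁.mul (isBigO_const_const a₂ (one_ne_zero (α := ℝ)) l)
  simp only [one_mul, mul_one] at hright hleft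
  exact (hright.add hleft).congr_left fun x => by noncomm_ring

lemma isBigO_prod_sub_prod {α ι R : Type*} [SeminormedCommRing R] {l : Filter α}
    (s : Finset ι) {f : ι → α → R} {a : ι → R} {g : α → ℝ}
    (hf : ∀ k ∈ s, (fun x => f k x - a k) =O[l] g) (hg : g =O[l] fun _ => (1 : ℝ)) :
    (fun x => ∏ k ∈ s, f k x - ∏ k ∈ s, a k) =O[l] g := by
  classical
  induction s using Finset.induction_on with
  | empty => simpa using isBigO_zero g l
  | insert k s hk ih =>
    simp only [prod_insert hk]
    exact isBigO_mul_sub_mul (hf k (mem_insert_self k s))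
      (ih fun j hj => hf j (mem_insert_of_mem hj)) hg

variable {ι : Type*} [Fintype ι]

lemma sqrt_pow_mul_integral_torusMeasure_prod (x : ℝ) (f : ι → ℝ → ℝ) :
    √x ^ Fintype.card ι * ∫ θ, ∏ k, f k (θ k) ∂torusMeasure ι =
      ∏ k, √x * ∫ t, f k t ∂circleMeasure := by
  rw [integral_torusMeasure_prod, prod_mul_distrib, prod_const, card_univ]

/-- The centred Gaussian weight whose inverse variances are `σ`. -/
noncomputable def gaussianWeight (σ θ : ι → ℝ) : ℝ := exp (-(∑ k, σ k * θ k ^ 2) / 2)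

lemma gaussianWeight_eq_prod (σ θ : ι → ℝ) :
    gaussianWeight σ θ = ∏ k, exp (-(σ k * θ k ^ 2 / 2)) := by
  rw [gaussianWeight, ← exp_sum, sum_neg_distrib, ← sum_div, neg_div]

lemma isBigO_integral_gaussianWeight_pow {σ : ι → ℝ} (hσ : ∀ k, 0 < σ k) :
    (fun N : ℕ => √N ^ Fintype.card ι * ∫ θ, gaussianWeight σ θ ^ N ∂torusMeasure ι -
      ∏ k, (√(2 * π * σ k))⁻¹) =O[atTop] fun N : ℕ => (N : ℝ)⁻¹ := by
  simp only [gaussianWeight_eq_prod, ← prod_pow, fun N : ℕ =>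
    sqrt_pow_mul_integral_torusMeasure_prod N fun (k : ι) t => exp (-(σ k * t ^ 2 / 2)) ^ N]
  exact isBigO_prod_sub_prod univ (fun k _ => isBigO_sqrt_mul_integral_exp_neg_mul_sq (hσ k))
    ((tendsto_inv_atTop_nhds_zero_nat (𝕜 := ℝ)).isBigO_one ℝ)

/-- The sum of the squared sines of the angles `θ`, which measures how far the modulus of the symbol
of a walk is from `1`. -/
noncomputable def sinSq (θ : ι → ℝ) : ℝ := ∑ k, sin (θ k) ^ 2

lemma sqrt_pow_mul_integral_exp_neg_sinSq_le {c x : ℝ} (hc : 0 < c) (hx : 0 < x) :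
    √x ^ Fintype.card ι * ∫ θ : ι → ℝ, exp (-(c * (x * sinSq θ))) ∂torusMeasure ι ≤
      (√(3 * π) / √c) ^ Fintype.card ι := by
  have hprod (θ : ι → ℝ) : exp (-(c * (x * sinSq θ))) = ∏ k, exp (-(c * x * sin (θ k) ^ 2)) := by
    rw [← exp_sum, sum_neg_distrib, ← mul_sum, sinSq, mul_assoc]
  simp only [hprod]
  rw [sqrt_pow_mul_integral_torusMeasure_prod x fun _ t => exp (-(c * x * sin t ^ 2)),
    ← card_univ, ← prod_const]
  refine prod_le_prod (fun k _ => by positivity) fun k _ => ?_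
  calc √x * ∫ t, exp (-(c * x * sin t ^ 2)) ∂circleMeasure ≤ √x * (√(3 * π) / √(c * x)) := by
        gcongr
        exact integral_exp_neg_mul_sin_sq_le (mul_pos hc hx)
    _ = √(3 * π) / √c := by
        rw [sqrt_mul hc.le]
        field_simp

end Gaussian

/-! ### The Laplace method on the torus -/

section PowerComparison

lemma pow_succ_sub_pow_succ_sub {R : Type*} [CommRing R] (x y : R) (N : ℕ) :
    x ^ (N + 1) - y ^ (N + 1) - (N + 1 : ℕ) * y ^ (N + 1 - 1) * (x - y) =
      x * (x ^ N - y ^ N - N * y ^ (N - 1) * (x - y)) + N * y ^ (N - 1) * (x - y) ^ 2 := by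
  cases N with
  | zero => simp
  | succ m =>
    simp only [Nat.add_sub_cancel]
    push_cast
    ring

lemma sq_mul_norm_pow_sub_pow_sub_le {R : Type*} [SeminormedCommRing R] [NormOneClass R] {x y : R}
    {r : ℝ} (hx : ‖x‖ ≤ r) (hy : ‖y‖ ≤ r) (N : ℕ) :
    r ^ 2 * ‖x ^ N - y ^ N - N * y ^ (N - 1) * (x - y)‖ ≤ N ^ 2 * ‖x - y‖ ^ 2 * r ^ N := by
  have hr : 0 ≤ r := (norm_nonneg x).trans hx
  induction N with
  | zero => simp
  | succ N ih =>
    have hsecond : r ^ 2 * ‖N * y ^ (N - 1) * (x - y) ^ 2‖ ≤ N * ‖x - y‖ ^ 2 * r ^ (N + 1) := by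
      cases N with
      | zero => simp
      | succ m =>
        calc r ^ 2 * ‖(m + 1 : ℕ) * y ^ m * (x - y) ^ 2‖
            ≤ r ^ 2 * ((m + 1 : ℕ) * r ^ m * ‖x - y‖ ^ 2) := by
              gcongr
              refine (norm_mul_le _ _).trans ?_
              gcongr
              · refine (norm_mul_le _ _).trans ?_
                gcongr
                · simpa using Nat.norm_cast_le (α := R) (m + 1)
                · exact (norm_pow_le _ _).trans (by gcongr)
              · exact norm_pow_le _ _
          _ = _ := by ring
    rw [pow_succ_sub_pow_succ_sub]
    calc r ^ 2 * ‖x * (x ^ N - y ^ N - N * y ^ (N - 1) * (x - y)) +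
            N * y ^ (N - 1) * (x - y) ^ 2‖
        ≤ ‖x‖ * (r ^ 2 * ‖x ^ N - y ^ N - N * y ^ (N - 1) * (x - y)‖) +
            r ^ 2 * ‖N * y ^ (N - 1) * (x - y) ^ 2‖ := by
          rw [mul_left_comm ‖x‖, ← mul_add]
          gcongr
          exact (norm_add_le _ _).trans (by gcongr; exact norm_mul_le _ _)
      _ ≤ r * (N ^ 2 * ‖x - y‖ ^ 2 * r ^ N) + N * ‖x - y‖ ^ 2 * r ^ (N + 1) := by gcongr
      _ = (N ^ 2 + N) * (‖x - y‖ ^ 2 * r ^ (N + 1)) := by ring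
      _ ≤ (N + 1) ^ 2 * (‖x - y‖ ^ 2 * r ^ (N + 1)) := by
          gcongr
          linarith [show (0 : ℝ) ≤ N from N.cast_nonneg]
      _ = ((N + 1 : ℕ) : ℝ) ^ 2 * ‖x - y‖ ^ 2 * r ^ (N + 1) := by
          push_cast
          ring

lemma sq_mul_abs_re_mul_pow_sub_pow_sub_le {f g : ℂ} {E r G δ : ℝ} (hf : ‖f‖ ≤ r) (hE0 : 0 ≤ E)
    (hE : E ≤ r) (hg : ‖g‖ ≤ G) (hδ : ‖f - E‖ ≤ δ) (N : ℕ) :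
    r ^ 2 * |(g * (f ^ N - E ^ N - N * E ^ (N - 1) * (f - E))).re| ≤ G * N ^ 2 * δ ^ 2 * r ^ N := by
  have hr : 0 ≤ r := hE0.trans hE
  have hG : 0 ≤ G := (norm_nonneg g).trans hg
  have hE' : ‖(E : ℂ)‖ ≤ r := by rwa [Complex.norm_of_nonneg hE0]
  calc r ^ 2 * |(g * (f ^ N - E ^ N - N * E ^ (N - 1) * (f - E))).re|
      ≤ ‖g‖ * (r ^ 2 * ‖f ^ N - E ^ N - N * E ^ (N - 1) * (f - E)‖) := by
        rw [mul_left_comm, ← norm_mul]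
        gcongr
        exact Complex.abs_re_le_norm _
    _ ≤ ‖g‖ * (N ^ 2 * ‖f - E‖ ^ 2 * r ^ N) :=
        mul_le_mul_of_nonneg_left (sq_mul_norm_pow_sub_pow_sub_le hf hE' N) (norm_nonneg g)
    _ ≤ G * (N ^ 2 * δ ^ 2 * r ^ N) := by gcongr
    _ = G * N ^ 2 * δ ^ 2 * r ^ N := by ring

lemma re_mul_pow_sub_eq (f g : ℂ) (E g₀ : ℝ) (N : ℕ) :
    (g * f ^ N).re - g₀ * E ^ N =
      (g * (f ^ N - E ^ N - N * E ^ (N - 1) * (f - E))).re + (g.re - g₀) * E ^ N +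
        N * E ^ (N - 1) * (g.re * (f.re - E) - g.im * f.im) := by
  have hcast : (N * E ^ (N - 1) * (f - E) : ℂ) = ((N * E ^ (N - 1) : ℝ) : ℂ) * (f - E) := by
    push_cast
    rfl
  rw [hcast, ← Complex.ofReal_pow]
  simp only [Complex.mul_re, Complex.sub_re, Complex.sub_im, Complex.ofReal_re, Complex.ofReal_im,
    Complex.mul_im]
  ring

lemma sq_mul_abs_re_mul_pow_sub_le {f g : ℂ} {E g₀ r G a b p q : ℝ} (hr : r ≤ 1) (hf : ‖f‖ ≤ r)
    (hE0 : 0 ≤ E) (hE : E ≤ r) (hg : ‖g‖ ≤ G) (hfre : |f.re - E| ≤ a) (hfim : |f.im| ≤ b)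
    (hgre : |g.re - g₀| ≤ p) (hgim : |g.im| ≤ q) (N : ℕ) :
    r ^ 2 * |(g * f ^ N).re - g₀ * E ^ N| ≤
      (G * N ^ 2 * (a + b) ^ 2 + p + N * (G * a + q * b)) * r ^ N := by
  have hr0 : 0 ≤ r := hE0.trans hE
  have hp : 0 ≤ p := (abs_nonneg _).trans hgre
  have hdiff : ‖f - E‖ ≤ a + b := by
    simpa using (Complex.norm_le_abs_re_add_abs_im (f - E)).trans (add_le_add hfre (by simpa))
  have hremainder := sq_mul_abs_re_mul_pow_sub_pow_sub_le hf hE0 hE hg hdiff N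
  have hamplitude : r ^ 2 * |(g.re - g₀) * E ^ N| ≤ p * r ^ N := by
    rw [abs_mul, abs_of_nonneg (pow_nonneg hE0 N)]
    exact (mul_le_of_le_one_left (by positivity) (pow_le_one₀ hr0 hr)).trans (by gcongr)
  have hbracket : |g.re * (f.re - E) - g.im * f.im| ≤ G * a + q * b := by
    refine (abs_sub _ _).trans ?_
    rw [abs_mul, abs_mul]
    exact add_le_add
      (mul_le_mul ((Complex.abs_re_le_norm g).trans hg) hfre (abs_nonneg _)
        ((norm_nonneg g).trans hg))
      (mul_le_mul hgim hfim (abs_nonneg _) ((abs_nonneg _).trans hgim))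
  have hlinear : r ^ 2 * |N * E ^ (N - 1) * (g.re * (f.re - E) - g.im * f.im)| ≤
      N * (G * a + q * b) * r ^ N := by
    have hbracket0 := (abs_nonneg _).trans hbracket
    cases N with
    | zero => simp
    | succ m =>
      rw [abs_mul, abs_of_nonneg (by positivity)]
      calc r ^ 2 * ((m + 1 : ℕ) * E ^ (m + 1 - 1) * |g.re * (f.re - E) - g.im * f.im|)
          ≤ r * r * ((m + 1 : ℕ) * r ^ m * (G * a + q * b)) := by
            rw [sq, Nat.add_sub_cancel]
            gcongr
        _ = r * ((m + 1 : ℕ) * (G * a + q * b) * r ^ (m + 1)) := by ring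
        _ ≤ (m + 1 : ℕ) * (G * a + q * b) * r ^ (m + 1) :=
            mul_le_of_le_one_left (by positivity) hr
  rw [re_mul_pow_sub_eq]
  have htriangle := mul_le_mul_of_nonneg_left (abs_add_three
    (g * (f ^ N - E ^ N - N * E ^ (N - 1) * (f - E))).re ((g.re - g₀) * E ^ N)
    (N * E ^ (N - 1) * (g.re * (f.re - E) - g.im * f.im))) (sq_nonneg r)
  linarith

end PowerComparison

section Laplace

open Real MeasureTheory Asymptotics Filter Topology

lemma exists_eval_le_mul_exp (P : Polynomial ℝ) {κ : ℝ} (hκ : 0 < κ) :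
    ∃ K ≥ 0, ∀ u ≥ 0, P.eval u ≤ K * exp (κ * u) := by
  refine ⟨∑ k ∈ range (P.natDegree + 1), |P.coeff k| * (k.factorial / κ ^ k), by positivity,
    fun u hu => ?_⟩
  rw [Polynomial.eval_eq_sum_range, sum_mul]
  refine sum_le_sum fun k _ => ?_
  have h := pow_div_factorial_le_exp (κ * u) (mul_nonneg hκ.le hu) k
  rw [div_le_iff₀ (by positivity), mul_pow] at h
  have hpow : u ^ k ≤ k.factorial / κ ^ k * exp (κ * u) := by
    rw [div_mul_eq_mul_div, le_div_iff₀ (by positivity)]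
    linarith
  calc P.coeff k * u ^ k ≤ |P.coeff k| * u ^ k := by
        gcongr
        exact le_abs_self _
    _ ≤ |P.coeff k| * (k.factorial / κ ^ k * exp (κ * u)) := by gcongr
    _ = |P.coeff k| * (k.factorial / κ ^ k) * exp (κ * u) := by ring

open Polynomial in
lemma exists_abs_re_mul_pow_sub_le {c : ℝ} (hc : 0 < c) (C D g₀ : ℝ) :
    ∃ K, ∀ (f g : ℂ) (E s y : ℝ) (N : ℕ), 1 ≤ N → 0 ≤ y → y ≤ 2 → y ^ 2 ≤ 3 * s → s ≤ D →
      ‖f‖ ≤ exp (-(c * s)) → 0 ≤ E → E ≤ exp (-(c * s)) → ‖g‖ ≤ C →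
      |f.re - E| ≤ C * y ^ 4 → |f.im| ≤ C * y ^ 3 → |g.re - g₀| ≤ C * y ^ 2 → |g.im| ≤ C * y →
      |(g * f ^ N).re - g₀ * E ^ N| ≤ K / N * exp (-(c / 2 * (N * s))) := by
  obtain ⟨M, hM, hpoly⟩ := exists_eval_le_mul_exp
    (.C C * X + .C (2 * C ^ 2) * X ^ 2 + .C (9 * C ^ 3) * X ^ 3) (κ := c / 6) (by positivity)
  simp only [eval_add, eval_mul, eval_C, eval_X, eval_pow] at hpoly
  refine ⟨M * exp (2 * c * D), ?_⟩
  intro f g E s y N hN hy hy2 hys hsD hf hE0 hE hg hfre hfim hgre hgim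
  have hN0 : (0 : ℝ) < N := Nat.cast_pos.2 hN
  have hC : 0 ≤ C := (norm_nonneg g).trans hg
  have : 0 ≤ s := by nlinarith [sq_nonneg y]
  have hmain := sq_mul_abs_re_mul_pow_sub_le (exp_le_one_iff.2 (by nlinarith)) hf hE0 hE hg hfre
    hfim hgre hgim N
  have hcoeff : C * N ^ 2 * (C * y ^ 4 + C * y ^ 3) ^ 2 + C * y ^ 2 +
      N * (C * (C * y ^ 4) + C * y * (C * y ^ 3)) ≤ M * exp (c / 6 * (N * y ^ 2)) / N := by
    rw [le_div_iff₀ hN0]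
    refine le_trans ?_ (hpoly (N * y ^ 2) (by positivity))
    have hsum : C * y ^ 4 + C * y ^ 3 ≤ 3 * (C * y ^ 3) := by
      nlinarith [mul_nonneg hC (pow_nonneg hy 3)]
    calc _ ≤ (C * N ^ 2 * (3 * (C * y ^ 3)) ^ 2 + C * y ^ 2 +
          N * (C * (C * y ^ 4) + C * y * (C * y ^ 3))) * N := by gcongr
      _ = _ := by ring
  have hexp : exp (c / 6 * (N * y ^ 2)) * exp (-(c * s)) ^ N ≤ exp (-(c / 2 * (N * s))) := by
    rw [← exp_nat_mul, ← exp_add, exp_le_exp]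
    nlinarith [mul_le_mul_of_nonneg_left hys (mul_pos hc hN0).le]
  calc |(g * f ^ N).re - g₀ * E ^ N|
      = exp (2 * (c * s)) * (exp (-(c * s)) ^ 2 * |(g * f ^ N).re - g₀ * E ^ N|) := by
        rw [← mul_assoc, ← exp_nat_mul, ← exp_add]
        simp
    _ ≤ exp (2 * c * D) * (M * exp (c / 6 * (N * y ^ 2)) / N * exp (-(c * s)) ^ N) := by
        refine mul_le_mul (exp_le_exp.2 ?_) (hmain.trans (by gcongr)) (by positivity) (exp_pos _).le
        nlinarith
    _ = M * exp (2 * c * D) / N * (exp (c / 6 * (N * y ^ 2)) * exp (-(c * s)) ^ N) := by ring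
    _ ≤ M * exp (2 * c * D) / N * exp (-(c / 2 * (N * s))) := by gcongr

variable {ι : Type*} [Fintype ι]

lemma sinSq_nonneg (θ : ι → ℝ) : 0 ≤ sinSq θ := sum_nonneg fun _ _ => sq_nonneg _

lemma sinSq_le_card (θ : ι → ℝ) : sinSq θ ≤ Fintype.card ι := by
  simpa [sinSq] using sum_le_sum fun k (_ : k ∈ univ) => sin_sq_le_one (θ k)

lemma sinSq_le_sum_sq (θ : ι → ℝ) : sinSq θ ≤ ∑ k, θ k ^ 2 :=
  sum_le_sum fun _ _ => sq_le_sq.2 abs_sin_le_abs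

lemma sin_sq_le_sinSq (θ : ι → ℝ) (k : ι) : sin (θ k) ^ 2 ≤ sinSq θ :=
  single_le_sum (f := fun k => sin (θ k) ^ 2) (fun _ _ => sq_nonneg _) (mem_univ k)

lemma norm_sq_le_of_forall_sq_le {θ : ι → ℝ} {x : ℝ} (hx : 0 ≤ x) (h : ∀ k, θ k ^ 2 ≤ x) :
    ‖θ‖ ^ 2 ≤ x := by
  rw [← Real.le_sqrt (norm_nonneg _) hx, pi_norm_le_iff_of_nonneg (sqrt_nonneg x)]
  exact fun k => abs_le_sqrt (h k)

lemma norm_sq_le_three_mul_sinSq {θ : ι → ℝ} (hθ : ‖θ‖ ≤ π / 2) : ‖θ‖ ^ 2 ≤ 3 * sinSq θ :=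
  norm_sq_le_of_forall_sq_le (mul_nonneg zero_le_three (sinSq_nonneg θ)) fun k =>
    (sq_le_three_mul_sin_sq ((norm_le_pi_norm θ k).trans hθ)).trans
      (mul_le_mul_of_nonneg_left (sin_sq_le_sinSq θ k) zero_le_three)

lemma gaussianWeight_pos (σ θ : ι → ℝ) : 0 < gaussianWeight σ θ := exp_pos _

lemma gaussianWeight_le_exp {σ θ : ι → ℝ} {c : ℝ} (hσ : ∀ k, 2 * c ≤ σ k) :
    gaussianWeight σ θ ≤ exp (-(c * ∑ k, θ k ^ 2)) := by
  rw [gaussianWeight, exp_le_exp, neg_div, neg_le_neg_iff, mul_sum, sum_div]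
  exact sum_le_sum fun k _ => by nlinarith [mul_le_mul_of_nonneg_right (hσ k) (sq_nonneg (θ k))]

lemma gaussianWeight_le_exp_sinSq {σ θ : ι → ℝ} {c : ℝ} (hc : 0 ≤ c) (hσ : ∀ k, 2 * c ≤ σ k) :
    gaussianWeight σ θ ≤ exp (-(c * sinSq θ)) :=
  (gaussianWeight_le_exp hσ).trans <|
    exp_le_exp.2 (neg_le_neg (mul_le_mul_of_nonneg_left (sinSq_le_sum_sq θ) hc))

lemma isBigO_eval_norm (k : ι) : (fun θ : ι → ℝ => θ k) =O[𝓝 0] fun θ => ‖θ‖ :=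
  .of_norm_le fun θ => norm_le_pi_norm θ k

lemma isBigO_sum_mul_sq (σ : ι → ℝ) :
    (fun θ : ι → ℝ => ∑ k, σ k * θ k ^ 2) =O[𝓝 0] fun θ => ‖θ‖ ^ 2 :=
  .fun_sum fun k _ => ((isBigO_eval_norm k).pow 2).const_mul_left _

lemma isBigO_gaussianWeight_sub (σ : ι → ℝ) :
    (fun θ => gaussianWeight σ θ - (1 - (∑ k, σ k * θ k ^ 2) / 2)) =O[𝓝 0] fun θ => ‖θ‖ ^ 4 := by
  have htendsto : Tendsto (fun θ : ι → ℝ => -(∑ k, σ k * θ k ^ 2) / 2) (𝓝 0) (𝓝 0) :=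
    Continuous.tendsto' (by fun_prop) _ _ (by simp)
  have hexp := (exp_sub_sum_range_isBigO_pow 2).comp_tendsto htendsto
  have hsq : (fun θ : ι → ℝ => (-(∑ k, σ k * θ k ^ 2) / 2) ^ 2) =O[𝓝 0] fun θ => ‖θ‖ ^ 4 := by
    have h := ((isBigO_sum_mul_sq σ).const_mul_left (-(1 / 2))).pow 2
    refine h.congr (fun θ => by ring) fun θ => by ring
  refine (hexp.trans hsq).congr_left fun θ => ?_
  simp only [Function.comp_apply, gaussianWeight, sum_range_succ, range_zero, sum_empty, pow_zero,
    pow_one, Nat.factorial_zero, Nat.factorial_one, Nat.cast_one]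
  ring

lemma mul_pow_le_div_mul_exp {x κ t : ℝ} (hκ : 0 < κ) (ht : 0 ≤ t) (hx0 : 0 ≤ x)
    (hx : x ≤ exp (-(κ * t))) {N : ℕ} (hN : 1 ≤ N) :
    t * x ^ N ≤ 2 / κ / N * exp (-(κ / 2 * (N * t))) := by
  have : (0 : ℝ) < N := Nat.cast_pos.2 hN
  set y := κ / 2 * (N * t) with hy
  have hpow : x ^ N ≤ exp (-y) * exp (-y) := by
    refine (pow_le_pow_left₀ hx0 hx N).trans_eq ?_
    rw [← exp_nat_mul, ← exp_add, hy]
    ring_nf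
  have hle : y * exp (-y) ≤ 1 := (mul_exp_neg_le_exp_neg_one y).trans (by simp)
  calc t * x ^ N ≤ t * (exp (-y) * exp (-y)) := by gcongr
    _ = 2 / κ / N * (y * exp (-y)) * exp (-y) := by
        rw [hy]
        field_simp
    _ ≤ 2 / κ / N * 1 * exp (-y) := by gcongr
    _ = 2 / κ / N * exp (-y) := by rw [mul_one]

lemma pow_le_div_mul_exp {x κ s D : ℝ} (hκ : 0 < κ) (hs : 0 ≤ s) (hsD : s ≤ D) (hx0 : 0 ≤ x)
    (hx : x ≤ exp (-κ)) {N : ℕ} (hN : 1 ≤ N) :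
    x ^ N ≤ 2 / κ / N * exp (-(κ / 2 / (D + 1) * (N * s))) := by
  have : 0 ≤ D := hs.trans hsD
  have h := mul_pow_le_div_mul_exp hκ zero_le_one hx0 (by simpa using hx) hN
  rw [one_mul] at h
  refine h.trans ?_
  gcongr 2 / κ / N * exp (-?_)
  rw [div_mul_eq_mul_div, div_le_iff₀ (by linarith), mul_one, mul_assoc, mul_comm (N : ℝ) s]
  nlinarith [mul_nonneg (mul_nonneg hκ.le N.cast_nonneg) (by linarith : 0 ≤ D + 1 - s)]

lemma norm_mul_norm_pow_le {f g : ℂ} {s D κ c C G : ℝ} (hκ : 0 < κ) (hc : 0 < c) (hC : 0 ≤ C)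
    (hs : 0 ≤ s) (hsD : s ≤ D) (hg : ‖g‖ ≤ G) (hf : ‖f‖ ≤ exp (-(c * s)))
    (h : ‖f‖ ≤ exp (-κ) ∨ ‖g‖ ≤ C * s) {N : ℕ} (hN : 1 ≤ N) :
    ‖g‖ * ‖f‖ ^ N ≤ max (G * (2 / κ)) (C * (2 / c)) / N *
      exp (-(min (c / 2) (κ / 2 / (D + 1)) * (N * s))) := by
  have : 0 ≤ D := hs.trans hsD
  have hG : 0 ≤ G := (norm_nonneg g).trans hg
  rcases h with hfκ | hgC
  · calc ‖g‖ * ‖f‖ ^ N ≤ G * (2 / κ / N * exp (-(κ / 2 / (D + 1) * (N * s)))) := by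
          gcongr
          exact pow_le_div_mul_exp hκ hs hsD (norm_nonneg f) hfκ hN
      _ = G * (2 / κ) / N * exp (-(κ / 2 / (D + 1) * (N * s))) := by ring
      _ ≤ _ := by
          gcongr
          exacts [le_max_left _ _, min_le_right _ _]
  · calc ‖g‖ * ‖f‖ ^ N ≤ C * s * ‖f‖ ^ N := by gcongr
      _ ≤ C * (2 / c / N * exp (-(c / 2 * (N * s)))) := by
          rw [mul_assoc]
          exact mul_le_mul_of_nonneg_left
            (mul_pow_le_div_mul_exp hc hs (norm_nonneg f) hf hN) hC
      _ = C * (2 / c) / N * exp (-(c / 2 * (N * s))) := by ring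
      _ ≤ _ := by
          gcongr
          exacts [le_max_right _ _, min_le_left _ _]

/-- The conditions under which `∫ g * f ^ N` over the torus is governed by the Gaussian behaviour
of the base `f` at the origin, where the amplitude `g` takes the value `g₀`. The modulus of the
base may return to `1` at the other points with vanishing sines, provided the amplitude vanishes
there. -/
structure IsLaplacePair (σ : ι → ℝ) (g₀ : ℝ) (f g : (ι → ℝ) → ℂ) : Prop where
  continuous_base : Continuous f
  continuous_amplitude : Continuous g
  re_base : (fun θ => (f θ).re - (1 - (∑ k, σ k * θ k ^ 2) / 2)) =O[𝓝 0] fun θ => ‖θ‖ ^ 4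
  im_base : (fun θ => (f θ).im) =O[𝓝 0] fun θ => ‖θ‖ ^ 3
  re_amplitude : (fun θ => (g θ).re - g₀) =O[𝓝 0] fun θ => ‖θ‖ ^ 2
  im_amplitude : (fun θ => (g θ).im) =O[𝓝 0] fun θ => ‖θ‖
  norm_base_le : ∃ c > 0, ∀ θ, ‖f θ‖ ≤ exp (-(c * sinSq θ))
  far : ∃ r < 1, ∃ C, ∀ θ, ‖θ‖ ≤ π → π / 2 < ‖θ‖ → ‖f θ‖ ≤ r ∨ ‖g θ‖ ≤ C * sinSq θ

namespace IsLaplacePair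

variable {σ : ι → ℝ} {g₀ c : ℝ} {f g : (ι → ℝ) → ℂ}

lemma exists_near_bound (h : IsLaplacePair σ g₀ f g) (hc : 0 < c) (hσ : ∀ k, 2 * c ≤ σ k)
    (hf : ∀ θ, ‖f θ‖ ≤ exp (-(c * sinSq θ))) :
    ∃ K, ∀ᶠ θ in 𝓝 0, ∀ N : ℕ, 1 ≤ N →
      |(g θ * f θ ^ N).re - g₀ * gaussianWeight σ θ ^ N| ≤
        K / N * exp (-(c / 2 * (N * sinSq θ))) := by
  have hre : (fun θ => (f θ).re - gaussianWeight σ θ) =O[𝓝 0] fun θ => ‖θ‖ ^ 4 :=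
    (h.re_base.sub (isBigO_gaussianWeight_sub σ)).congr_left fun θ => by ring
  obtain ⟨C, hCre, hCim, hCgre, hCgim, hCg⟩ := ((isBigO_iff_eventually_isBigOWith.1 hre).and
    ((isBigO_iff_eventually_isBigOWith.1 h.im_base).and
      ((isBigO_iff_eventually_isBigOWith.1 h.re_amplitude).and
        ((isBigO_iff_eventually_isBigOWith.1 h.im_amplitude).and
          (eventually_gt_atTop ‖g 0‖))))).exists
  obtain ⟨K, hK⟩ := exists_abs_re_mul_pow_sub_le hc C (Fintype.card ι) g₀
  refine ⟨K, ?_⟩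
  have hnorm : ∀ᶠ θ : ι → ℝ in 𝓝 0, ‖θ‖ < π / 2 :=
    continuous_norm.tendsto' 0 0 norm_zero |>.eventually_lt_const (by positivity)
  filter_upwards [hCre.bound, hCim.bound, hCgre.bound, hCgim.bound, hnorm,
    h.continuous_amplitude.norm.tendsto 0 |>.eventually_lt_const hCg]
    with θ hθre hθim hθgre hθgim hθ hθg N hN
  simp only [norm_pow, norm_eq_abs, abs_norm] at hθre hθim hθgre hθgim
  refine hK _ _ _ _ ‖θ‖ N hN (norm_nonneg θ) (by linarith [pi_le_four])
    (norm_sq_le_three_mul_sinSq hθ.le) (sinSq_le_card θ) (hf θ) (gaussianWeight_pos σ θ).le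
    (gaussianWeight_le_exp_sinSq hc.le hσ) hθg.le hθre hθim hθgre hθgim

lemma exists_norm_le_exp_or (h : IsLaplacePair σ g₀ f g) (hc : 0 < c)
    (hf : ∀ θ, ‖f θ‖ ≤ exp (-(c * sinSq θ))) {δ : ℝ} (hδ : 0 < δ) :
    ∃ κ > 0, κ ≤ c * δ ^ 2 ∧ ∃ C ≥ 0, ∀ θ, ‖θ‖ ≤ π → δ ≤ ‖θ‖ →
      ‖f θ‖ ≤ exp (-κ) ∨ ‖g θ‖ ≤ C * sinSq θ := by
  obtain ⟨r, hr, C, hfar⟩ := h.far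
  refine ⟨min (1 - r) (c * δ ^ 2 / 3), lt_min (by linarith) (by positivity),
    (min_le_right _ _).trans (by linarith [show 0 ≤ c * δ ^ 2 by positivity]), |C|,
    abs_nonneg C, fun θ hπ hθ => ?_⟩
  rcases le_or_gt ‖θ‖ (π / 2) with hhalf | hhalf
  · left
    refine (hf θ).trans (exp_le_exp.2 (neg_le_neg ((min_le_right _ _).trans ?_)))
    nlinarith [norm_sq_le_three_mul_sinSq hhalf, pow_le_pow_left₀ hδ.le hθ 2]
  · refine (hfar θ hπ hhalf).imp (fun hle => hle.trans ?_) fun hle =>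
      hle.trans (mul_le_mul_of_nonneg_right (le_abs_self C) (sinSq_nonneg θ))
    have hmin := min_le_left (1 - r) (c * δ ^ 2 / 3)
    linarith [add_one_le_exp (-min (1 - r) (c * δ ^ 2 / 3))]

lemma exists_far_bound (h : IsLaplacePair σ g₀ f g) (hc : 0 < c) (hσ : ∀ k, 2 * c ≤ σ k)
    (hf : ∀ θ, ‖f θ‖ ≤ exp (-(c * sinSq θ))) {δ : ℝ} (hδ : 0 < δ) :
    ∃ K, ∃ c' > 0, ∀ θ, ‖θ‖ ≤ π → δ ≤ ‖θ‖ → ∀ N : ℕ, 1 ≤ N →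
      |(g θ * f θ ^ N).re - g₀ * gaussianWeight σ θ ^ N| ≤ K / N * exp (-(c' * (N * sinSq θ))) := by
  obtain ⟨κ, hκ, hκδ, C, hC, hfg⟩ := h.exists_norm_le_exp_or hc hf hδ
  obtain ⟨G, hG⟩ := (isCompact_closedBall (0 : ι → ℝ) π).exists_bound_of_continuousOn
    h.continuous_amplitude.continuousOn
  refine ⟨max (G * (2 / κ)) (C * (2 / c)) + max (|g₀| * (2 / κ)) (C * (2 / c)),
    min (c / 2) (κ / 2 / (Fintype.card ι + 1)), by positivity, fun θ hπ hθ N hN => ?_⟩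
  have hnorm : ‖(gaussianWeight σ θ : ℂ)‖ = gaussianWeight σ θ :=
    Complex.norm_of_nonneg (gaussianWeight_pos σ θ).le
  have hgauss : gaussianWeight σ θ ≤ exp (-κ) := by
    refine (gaussianWeight_le_exp hσ).trans (exp_le_exp.2 (neg_le_neg (hκδ.trans ?_)))
    refine mul_le_mul_of_nonneg_left ((pow_le_pow_left₀ hδ.le hθ 2).trans ?_) hc.le
    exact norm_sq_le_of_forall_sq_le (by positivity) fun k =>
      single_le_sum (f := fun k => θ k ^ 2) (fun _ _ => sq_nonneg _) (mem_univ k)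
  have hbase := norm_mul_norm_pow_le hκ hc hC (sinSq_nonneg θ) (sinSq_le_card θ)
    (hG θ (by simpa using hπ)) (hf θ) (hfg θ hπ hθ) hN
  have hmodel := norm_mul_norm_pow_le (f := gaussianWeight σ θ) (g := g₀) hκ hc hC
    (sinSq_nonneg θ) (sinSq_le_card θ) (Complex.norm_real g₀).le
    (hnorm.trans_le (gaussianWeight_le_exp_sinSq hc.le hσ)) (.inl (hnorm.trans_le hgauss)) hN
  rw [hnorm, Complex.norm_real, norm_eq_abs] at hmodel
  rw [add_div, add_mul]
  refine (abs_sub _ _).trans (add_le_add (le_trans ?_ hbase) (le_trans ?_ hmodel))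
  · rw [← norm_pow, ← norm_mul]
    exact Complex.abs_re_le_norm _
  · rw [abs_mul, abs_of_pos (pow_pos (gaussianWeight_pos σ θ) N)]

lemma exists_bound (h : IsLaplacePair σ g₀ f g) (hσ : ∀ k, 0 < σ k) :
    ∃ K, ∃ c > 0, ∀ θ, ‖θ‖ ≤ π → ∀ N : ℕ, 1 ≤ N →
      |(g θ * f θ ^ N).re - g₀ * gaussianWeight σ θ ^ N| ≤ K / N * exp (-(c * (N * sinSq θ))) := by
  obtain ⟨c₀, hc₀, hf₀⟩ := h.norm_base_le
  obtain ⟨c, ⟨hcσ, hcc₀⟩, hc⟩ : ∃ c, ((∀ k, 2 * c ≤ σ k) ∧ c ≤ c₀) ∧ 0 < c := by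
    have hlim : Tendsto (fun c : ℝ => 2 * c) (𝓝[>] 0) (𝓝 0) :=
      (Continuous.tendsto' (by fun_prop) _ _ (by simp)).mono_left nhdsWithin_le_nhds
    have hid : Tendsto (fun c : ℝ => c) (𝓝[>] 0) (𝓝 0) := nhdsWithin_le_nhds
    exact (((eventually_all.2 fun k => hlim.eventually_le_const (hσ k)).and
      (hid.eventually_le_const hc₀)).and self_mem_nhdsWithin).exists
  have hf : ∀ θ, ‖f θ‖ ≤ exp (-(c * sinSq θ)) := fun θ => (hf₀ θ).trans <|
    exp_le_exp.2 (neg_le_neg (mul_le_mul_of_nonneg_right hcc₀ (sinSq_nonneg θ)))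
  obtain ⟨K, hnear⟩ := h.exists_near_bound hc hcσ hf
  obtain ⟨δ, hδ, hball⟩ := Metric.eventually_nhds_iff.1 hnear
  obtain ⟨K', c', hc', hfar⟩ := h.exists_far_bound hc hcσ hf hδ
  refine ⟨max |K| |K'|, min (c / 2) c', by positivity, fun θ hπ N hN => ?_⟩
  have hs := sinSq_nonneg θ
  rcases lt_or_ge ‖θ‖ δ with hθ | hθ
  · refine (hball (by simpa using hθ) N hN).trans ?_
    gcongr
    exacts [le_max_of_le_left (le_abs_self K), min_le_left _ _]
  · refine (hfar θ hπ hθ N hN).trans ?_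
    gcongr
    exacts [le_max_of_le_right (le_abs_self K'), min_le_right _ _]

theorem isBigO_integral (h : IsLaplacePair σ g₀ f g) (hσ : ∀ k, 0 < σ k) :
    (fun N : ℕ => √N ^ Fintype.card ι * ∫ θ, (g θ * f θ ^ N).re ∂torusMeasure ι -
      g₀ * ∏ k, (√(2 * π * σ k))⁻¹) =O[atTop] fun N => (N : ℝ)⁻¹ := by
  obtain ⟨K, c, hc, hbound⟩ := h.exists_bound hσ
  have hcontf := h.continuous_base
  have hcontg := h.continuous_amplitude
  have hmodel : Continuous (gaussianWeight σ) := by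
    unfold gaussianWeight
    fun_prop
  have hsin : Continuous (sinSq : (ι → ℝ) → ℝ) := by
    unfold sinSq
    fun_prop
  have herror : (fun N : ℕ => √N ^ Fintype.card ι *
      ∫ θ, ((g θ * f θ ^ N).re - g₀ * gaussianWeight σ θ ^ N) ∂torusMeasure ι) =O[atTop]
        fun N => (N : ℝ)⁻¹ := by
    refine IsBigO.of_bound (|K| * (√(3 * π) / √c) ^ Fintype.card ι) ?_
    filter_upwards [eventually_ge_atTop 1] with N hN
    have hN0 : (0 : ℝ) < N := Nat.cast_pos.2 hN
    have hle := norm_integral_le_of_norm_le (μ := torusMeasure ι)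
      (f := fun θ => (g θ * f θ ^ N).re - g₀ * gaussianWeight σ θ ^ N)
      (g := fun θ => |K| / N * exp (-(c * (N * sinSq θ))))
      (integrable_torusMeasure (by fun_prop)) <| ae_norm_le_pi_torusMeasure.mono fun θ hθ => by
        refine (hbound θ hθ N hN).trans ?_
        gcongr
        exact le_abs_self K
    rw [integral_const_mul] at hle
    rw [norm_mul, norm_of_nonneg (by positivity : 0 ≤ √N ^ Fintype.card ι), norm_inv,
      Real.norm_natCast]
    calc _ ≤ √N ^ Fintype.card ι *
          (|K| / N * ∫ θ, exp (-(c * (N * sinSq θ))) ∂torusMeasure ι) := by gcongr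
      _ = |K| / N * (√N ^ Fintype.card ι *
          ∫ θ, exp (-(c * (N * sinSq θ))) ∂torusMeasure ι) := by ring
      _ ≤ |K| / N * (√(3 * π) / √c) ^ Fintype.card ι := by
          gcongr
          exact sqrt_pow_mul_integral_exp_neg_sinSq_le hc hN0
      _ = _ := by ring
  refine (herror.add ((isBigO_integral_gaussianWeight_pow hσ).const_mul_left g₀)).congr_left
    fun N => ?_
  rw [integral_sub (integrable_torusMeasure (by fun_prop)) (integrable_torusMeasure (by fun_prop)),
    integral_const_mul]
  ring

end IsLaplacePair

end Laplace

/-! ### The symbol of the tilted walk -/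

section TiltedSymbol

open Real

lemma re_tiltedSymbol (a b q ρ φ : ℝ) :
    (tiltedSymbol a b q ρ φ).re = q + (ρ * b + a / ρ) * cos φ := by
  rw [tiltedSymbol, ← neg_mul, ← Complex.ofReal_neg, ← Complex.ofReal_mul, ← Complex.ofReal_div]
  simp only [Complex.add_re, Complex.re_ofReal_mul, Complex.exp_ofReal_mul_I_re, Complex.ofReal_re,
    cos_neg]
  ring

lemma im_tiltedSymbol (a b q ρ φ : ℝ) :
    (tiltedSymbol a b q ρ φ).im = (ρ * b - a / ρ) * sin φ := by
  rw [tiltedSymbol, ← neg_mul, ← Complex.ofReal_neg, ← Complex.ofReal_mul, ← Complex.ofReal_div]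
  simp only [Complex.add_im, Complex.im_ofReal_mul, Complex.exp_ofReal_mul_I_im, Complex.ofReal_im,
    sin_neg]
  ring

lemma norm_tiltedSymbol_le (a b q ρ φ : ℝ) :
    ‖tiltedSymbol a b q ρ φ‖ ≤ |q| + |ρ * b| + |a / ρ| := by
  rw [tiltedSymbol, ← neg_mul, ← Complex.ofReal_neg, ← Complex.ofReal_mul, ← Complex.ofReal_div]
  refine norm_add₃_le.trans_eq ?_
  simp only [norm_mul, Complex.norm_exp_ofReal_mul_I, Complex.norm_real, mul_one, norm_eq_abs,
    abs_mul]

lemma norm_tiltedSymbol_sq_le (a b q ρ φ : ℝ) :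
    ‖tiltedSymbol a b q ρ φ‖ ^ 2 ≤
      q ^ 2 + 2 * (q * (ρ * b + a / ρ)) * cos φ + (|ρ * b| + |a / ρ|) ^ 2 := by
  have hprod : ρ * b * (a / ρ) * (cos φ ^ 2 - sin φ ^ 2) ≤ |ρ * b| * |a / ρ| := by
    rw [← abs_mul, ← cos_two_mul']
    exact (le_abs_self _).trans
      (by rw [abs_mul]; exact mul_le_of_le_one_right (abs_nonneg _) (abs_cos_le_one _))
  rw [← Complex.normSq_eq_norm_sq, Complex.normSq_apply, re_tiltedSymbol, im_tiltedSymbol]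
  generalize ρ * b = β at *
  generalize a / ρ = α at *
  nlinarith [sin_sq_add_cos_sq φ, sq_abs β, sq_abs α]

end TiltedSymbol

section CosineExpansion

open Real Asymptotics Filter Topology

variable {ι : Type*} [Fintype ι]

lemma isBigO_cos_mul_sub (a : ℝ) (k : ι) :
    (fun θ : ι → ℝ => cos (a * θ k) - (1 - (a * θ k) ^ 2 / 2)) =O[𝓝 0] fun θ => ‖θ‖ ^ 4 := by
  have hlim : Tendsto (fun θ : ι → ℝ => |a * θ k|) (𝓝 0) (𝓝 0) :=
    Continuous.tendsto' (by fun_prop) _ _ (by simp)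
  have hcos : (fun θ : ι → ℝ => cos (a * θ k) - (1 - (a * θ k) ^ 2 / 2)) =O[𝓝 0]
      fun θ => (a * θ k) ^ 4 :=
    .of_bound (5 / 96) <| (hlim.eventually_le_const one_pos).mono fun θ hθ => by
      simpa only [norm_pow, norm_eq_abs, mul_comm] using cos_bound hθ
  exact hcos.trans (((isBigO_eval_norm k).const_mul_left a).pow 4)

lemma isBigO_prod_cos_mul_sub (a : ι → ℝ) (s : Finset ι) :
    (fun θ : ι → ℝ => ∏ k ∈ s, cos (a k * θ k) - (1 - (∑ k ∈ s, (a k * θ k) ^ 2) / 2)) =O[𝓝 0]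
      fun θ => ‖θ‖ ^ 4 := by
  classical
  induction s using Finset.induction_on with
  | empty => simpa using isBigO_zero _ _
  | insert k s hk ih =>
    have hsq (j : ι) : (fun θ : ι → ℝ => (a j * θ j) ^ 2) =O[𝓝 0] fun θ => ‖θ‖ ^ 2 :=
      ((isBigO_eval_norm j).const_mul_left (a j)).pow 2
    have hprod : (fun θ : ι → ℝ => ∏ k ∈ s, cos (a k * θ k)) =O[𝓝 0] fun _ => (1 : ℝ) :=
      (Continuous.tendsto (by fun_prop) 0).isBigO_one ℝ
    have hquad : (fun θ : ι → ℝ => 1 - (a k * θ k) ^ 2 / 2) =O[𝓝 0] fun _ => (1 : ℝ) :=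
      (Continuous.tendsto (by fun_prop) 0).isBigO_one ℝ
    have h1 := (isBigO_cos_mul_sub (a k) k).mul hprod
    have h2 := hquad.mul ih
    have h3 := ((hsq k).mul (IsBigO.fun_sum fun j (_ : j ∈ s) => hsq j)).const_mul_left (1 / 4)
    simp only [mul_one, one_mul, ← pow_add] at h1 h2 h3
    refine ((h1.add h2).add h3).congr_left fun θ => ?_
    rw [prod_insert hk, sum_insert hk]
    ring

lemma isBigO_prod_cos_mul_sub_one (a : ι → ℝ) :
    (fun θ : ι → ℝ => ∏ k, cos (a k * θ k) - 1) =O[𝓝 0] fun θ => ‖θ‖ ^ 2 := by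
  have hquad := isBigO_sum_mul_sq fun k => -(a k ^ 2 / 2)
  have hquart := (isBigO_prod_cos_mul_sub a univ).trans
    (isLittleO_norm_pow_norm_pow (m := 2) (by simp)).isBigO
  refine (hquart.add hquad).congr_left fun θ => ?_
  simp only [mul_pow, neg_mul, sum_neg_distrib, sum_div, div_mul_eq_mul_div]
  ring

end CosineExpansion

section Slices

open Real Asymptotics Filter Topology

variable {e : ℕ} {S : Finset (Fin (e + 1) → ℤ)} {w : (Fin (e + 1) → ℤ) → ℝ}

lemma sliceTransform_zero (ε : ℤ) :
    sliceTransform S w ε 0 = ∑ i ∈ S with i (Fin.last e) = ε, w i := by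
  simp [sliceTransform]

lemma isBigO_sliceTransform_sub (ε : ℤ) :
    (fun θ => sliceTransform S w ε θ - sliceTransform S w ε 0) =O[𝓝 0] fun θ => ‖θ‖ ^ 2 := by
  have h : (fun θ : Fin e → ℝ => ∑ i ∈ S with i (Fin.last e) = ε,
      w i * (∏ k, cos (i k.castSucc * θ k) - 1)) =O[𝓝 0] fun θ => ‖θ‖ ^ 2 :=
    .fun_sum fun i _ => (isBigO_prod_cos_mul_sub_one _).const_mul_left _
  refine h.congr_left fun θ => ?_
  rw [sliceTransform_zero, sliceTransform, ← sum_sub_distrib]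
  exact sum_congr rfl fun i _ => by ring

lemma abs_sliceTransform_le (hw : ∀ i ∈ S, 0 ≤ w i) (ε : ℤ) (θ : Fin e → ℝ) :
    |sliceTransform S w ε θ| ≤
      ∑ i ∈ S with i (Fin.last e) = ε, w i * |∏ k, cos (i k.castSucc * θ k)| :=
  (abs_sum_le_sum_abs _ _).trans_eq <| sum_congr rfl fun i hi => by
    rw [abs_mul, abs_of_nonneg (hw i (mem_filter.1 hi).1)]

lemma abs_sliceTransform_le_zero (hw : ∀ i ∈ S, 0 ≤ w i) (ε : ℤ) (θ : Fin e → ℝ) :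
    |sliceTransform S w ε θ| ≤ sliceTransform S w ε 0 := by
  refine (abs_sliceTransform_le hw ε θ).trans ?_
  rw [sliceTransform_zero]
  refine sum_le_sum fun i hi => mul_le_of_le_one_right (hw i (mem_filter.1 hi).1) ?_
  rw [abs_prod]
  exact prod_le_one (fun _ _ => abs_nonneg _) fun _ _ => abs_cos_le_one _

lemma sliceTransform_nonneg (hS : HasSmallSteps S) (hw : ∀ i ∈ S, 0 ≤ w i) (ε : ℤ)
    {θ : Fin e → ℝ} (hθ : ‖θ‖ ≤ π / 2) : 0 ≤ sliceTransform S w ε θ := by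
  refine sum_nonneg fun i hi => mul_nonneg (hw i (mem_filter.1 hi).1) (prod_nonneg fun k _ => ?_)
  have hk := abs_le.1 ((norm_le_pi_norm θ k).trans hθ)
  rcases hS i (mem_filter.1 hi).1 k.castSucc with h | h | h <;>
    simp [h, cos_nonneg_of_mem_Icc hk]

end Slices

section StepSymbol

open Real Asymptotics Filter Topology

variable {e : ℕ} (S : Finset (Fin (e + 1) → ℤ)) (w : (Fin (e + 1) → ℤ) → ℝ) (ρ : ℝ)

/-- The total weight of the steps after tilting the last coordinate by `ρ`: the quantity `S(1,ρ)`
of the paper. -/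
noncomputable def tiltedMass : ℝ := ∑ i ∈ S, w i * ρ ^ i (Fin.last e)

/-- The second moment of the coordinate `k` of a step under the tilted step distribution. -/
noncomputable def tiltedVariance (k : Fin (e + 1)) : ℝ :=
  (∑ i ∈ S, w i * ρ ^ i (Fin.last e) * (i k : ℝ) ^ 2) / tiltedMass S w ρ

/-- The characteristic function of the tilted step distribution, symmetrized in all coordinates but
the last one. -/
noncomputable def stepSymbol (θ : Fin (e + 1) → ℝ) : ℂ :=
  tiltedSymbol (sliceTransform S w (-1) (Fin.init θ)) (sliceTransform S w 1 (Fin.init θ))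
    (sliceTransform S w 0 (Fin.init θ)) ρ (θ (Fin.last e)) / tiltedMass S w ρ

lemma continuous_init : Continuous (Fin.init : (Fin (e + 1) → ℝ) → Fin e → ℝ) :=
  continuous_pi fun k => continuous_apply k.castSucc

lemma norm_init_le (θ : Fin (e + 1) → ℝ) : ‖(Fin.init θ : Fin e → ℝ)‖ ≤ ‖θ‖ :=
  (pi_norm_le_iff_of_nonneg (norm_nonneg θ)).2 fun k => norm_le_pi_norm θ k.castSucc

lemma continuous_stepSymbol : Continuous (stepSymbol S w ρ) :=
  (continuous_tiltedSymbol ((continuous_sliceTransform S w _).comp continuous_init)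
    ((continuous_sliceTransform S w _).comp continuous_init)
    ((continuous_sliceTransform S w _).comp continuous_init) (continuous_apply _) ρ).div_const _

variable {S w ρ}

lemma HasSmallSteps.sum_mul_zpow_mul (hS : HasSmallSteps S) (g : (Fin (e + 1) → ℤ) → ℝ) :
    ∑ i ∈ S, w i * ρ ^ i (Fin.last e) * g i =
      (∑ i ∈ S with i (Fin.last e) = -1, w i * g i) / ρ +
        ∑ i ∈ S with i (Fin.last e) = 0, w i * g i +
          ρ * ∑ i ∈ S with i (Fin.last e) = 1, w i * g i := by
  rw [hS.sum_eq_add_add (Fin.last e), sum_div, mul_sum]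
  congr 1
  · congr 1
    all_goals
      refine sum_congr rfl fun i hi => ?_
      simp only [(mem_filter.1 hi).2, zpow_neg_one, zpow_zero]
      ring
  · refine sum_congr rfl fun i hi => ?_
    rw [(mem_filter.1 hi).2, zpow_one]
    ring

lemma tiltedMass_eq (hS : HasSmallSteps S) : tiltedMass S w ρ = sliceTransform S w (-1) 0 / ρ +
    sliceTransform S w 0 0 + ρ * sliceTransform S w 1 0 := by
  simpa [tiltedMass, sliceTransform_zero] using hS.sum_mul_zpow_mul (w := w) (ρ := ρ) fun _ => 1

lemma re_stepSymbol (hS : HasSmallSteps S) (θ : Fin (e + 1) → ℝ) : (stepSymbol S w ρ θ).re =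
    (∑ i ∈ S, w i * ρ ^ i (Fin.last e) * ∏ k, cos (i k * θ k)) / tiltedMass S w ρ := by
  have hslice (ε : ℤ) : ∑ i ∈ S with i (Fin.last e) = ε, w i * ∏ k, cos (i k * θ k) =
      sliceTransform S w ε (Fin.init θ) * cos (ε * θ (Fin.last e)) := by
    rw [sliceTransform, sum_mul]
    refine sum_congr rfl fun i hi => ?_
    rw [Fin.prod_univ_castSucc, (mem_filter.1 hi).2, mul_assoc]
    rfl
  rw [stepSymbol, Complex.div_ofReal_re, re_tiltedSymbol, hS.sum_mul_zpow_mul, hslice, hslice,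
    hslice]
  simp only [Int.cast_neg, Int.cast_one, neg_mul, one_mul, cos_neg, Int.cast_zero, zero_mul,
    cos_zero]
  ring

lemma isBigO_re_stepSymbol (hS : HasSmallSteps S) (hM : tiltedMass S w ρ ≠ 0) :
    (fun θ => (stepSymbol S w ρ θ).re - (1 - (∑ k, tiltedVariance S w ρ k * θ k ^ 2) / 2))
      =O[𝓝 0] fun θ => ‖θ‖ ^ 4 := by
  have hsum : (fun θ : Fin (e + 1) → ℝ => ∑ i ∈ S, w i * ρ ^ i (Fin.last e) *
      (∏ k, cos (i k * θ k) - (1 - (∑ k, (i k * θ k) ^ 2) / 2))) =O[𝓝 0] fun θ => ‖θ‖ ^ 4 :=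
    .fun_sum fun i _ => (isBigO_prod_cos_mul_sub _ _).const_mul_left _
  refine (hsum.const_mul_left (tiltedMass S w ρ)⁻¹).congr_left fun θ => ?_
  have hvariance : (∑ k, tiltedVariance S w ρ k * θ k ^ 2) * tiltedMass S w ρ =
      ∑ i ∈ S, w i * ρ ^ i (Fin.last e) * ∑ k, (i k * θ k) ^ 2 := by
    simp only [tiltedVariance, sum_mul, mul_sum, div_mul_eq_mul_div, div_mul_cancel₀ _ hM]
    rw [sum_comm]
    exact sum_congr rfl fun i _ => sum_congr rfl fun k _ => by ring
  have hmass : ∑ i ∈ S, w i * ρ ^ i (Fin.last e) = tiltedMass S w ρ := rfl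
  rw [re_stepSymbol hS]
  simp only [mul_sub, sum_sub_distrib, mul_one, hmass, mul_div_assoc', ← sum_div, ← hvariance]
  field_simp

lemma abs_cos_le_one_sub (t : ℝ) : |cos t| ≤ 1 - sin t ^ 2 / 2 := by
  nlinarith [sq_nonneg (|cos t| - 1), sq_abs (cos t), sin_sq_add_cos_sq t]

lemma norm_stepSymbol_le_one_sub (hS : HasSmallSteps S) (hw : ∀ i ∈ S, 0 ≤ w i) (hρ : 0 < ρ)
    (hM : 0 < tiltedMass S w ρ) (k : Fin e) (θ : Fin (e + 1) → ℝ) :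
    ‖stepSymbol S w ρ θ‖ ≤ 1 - tiltedVariance S w ρ k.castSucc * sin (θ k.castSucc) ^ 2 / 2 := by
  have hprod (i) (hi : i ∈ S) : |∏ k, cos (i k.castSucc * Fin.init θ k)| ≤
      1 - (i k.castSucc : ℝ) ^ 2 * sin (θ k.castSucc) ^ 2 / 2 := by
    rw [abs_prod, ← mul_prod_erase univ _ (mem_univ k)]
    refine (mul_le_of_le_one_right (abs_nonneg _)
      (prod_le_one (fun _ _ => abs_nonneg _) fun _ _ => abs_cos_le_one _)).trans ?_
    refine (abs_cos_le_one_sub _).trans_eq ?_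
    rcases hS i hi k.castSucc with h | h | h <;> simp [h, Fin.init]
  have hslice (ε : ℤ) := abs_sliceTransform_le hw ε (Fin.init θ)
  have hsum := hS.sum_mul_zpow_mul (w := w) (ρ := ρ)
    fun i => |∏ k, cos (i k.castSucc * Fin.init θ k)|
  rw [stepSymbol, norm_div, Complex.norm_of_nonneg hM.le, div_le_iff₀ hM]
  calc _ ≤ _ := norm_tiltedSymbol_le _ _ _ _ _
    _ ≤ ∑ i ∈ S, w i * ρ ^ i (Fin.last e) * |∏ k, cos (i k.castSucc * Fin.init θ k)| := by
        rw [hsum, abs_mul, abs_div, abs_of_pos hρ]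
        linarith [hslice 0, div_le_div_of_nonneg_right (hslice (-1)) hρ.le,
          mul_le_mul_of_nonneg_left (hslice 1) hρ.le]
    _ ≤ ∑ i ∈ S, w i * ρ ^ i (Fin.last e) *
          (1 - (i k.castSucc : ℝ) ^ 2 * sin (θ k.castSucc) ^ 2 / 2) :=
        sum_le_sum fun i hi =>
          mul_le_mul_of_nonneg_left (hprod i hi) (mul_nonneg (hw i hi) (zpow_pos hρ _).le)
    _ = _ := by
        rw [tiltedVariance, sub_mul, one_mul, div_mul_eq_mul_div, mul_right_comm,
          div_mul_cancel₀ _ hM.ne']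
        simp only [mul_sub, sum_sub_distrib, mul_one, mul_div_assoc', ← mul_assoc, ← sum_mul,
          ← sum_div]
        rfl

end StepSymbol

section SaddlePoint

open Real Asymptotics Filter Topology

variable {e : ℕ}

/-- The walk has small steps with non-negative weights, symmetric in all coordinates but the last
one, and `ρ > 1` is a saddle point: tilting the last coordinate by `ρ` removes the drift. -/
structure IsSaddlePoint (S : Finset (Fin (e + 1) → ℤ)) (w : (Fin (e + 1) → ℤ) → ℝ) (ρ : ℝ) :
    Prop where
  smallSteps : HasSmallSteps S
  nonneg : ∀ i ∈ S, 0 ≤ w i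
  axisSymmetric : ∀ j : Fin e, AxisSymmetric S w j.castSucc
  exists_forward : ∀ j, ∃ i ∈ S, i j = 1 ∧ 0 < w i
  exists_flat : ∃ i ∈ S, i (Fin.last e) = 0 ∧ 0 < w i
  one_lt : 1 < ρ
  balance : ∑ i ∈ S with i (Fin.last e) = -1, w i = ρ ^ 2 * ∑ i ∈ S with i (Fin.last e) = 1, w i

variable {S : Finset (Fin (e + 1) → ℤ)} {w : (Fin (e + 1) → ℤ) → ℝ} {ρ : ℝ}

lemma tendsto_init_zero : Tendsto (Fin.init : (Fin (e + 1) → ℝ) → Fin e → ℝ) (𝓝 0) (𝓝 0) :=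
  continuous_init.tendsto 0

lemma isBigO_sliceTransform_init_sub (ε : ℤ) :
    (fun θ : Fin (e + 1) → ℝ => sliceTransform S w ε (Fin.init θ) - sliceTransform S w ε 0)
      =O[𝓝 0] fun θ => ‖θ‖ ^ 2 :=
  ((isBigO_sliceTransform_sub ε).comp_tendsto tendsto_init_zero).trans <|
    .of_norm_le fun θ => by
      simpa using pow_le_pow_left₀ (norm_nonneg _) (norm_init_le θ) 2

lemma exists_le_exp_neg_sinSq {ι : Type*} [Fintype ι] [Nonempty ι] {x : (ι → ℝ) → ℝ}
    (h : ∀ k, ∃ c > 0, ∀ θ, x θ ≤ exp (-(c * sin (θ k) ^ 2))) :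
    ∃ c > 0, ∀ θ, x θ ≤ exp (-(c * sinSq θ)) := by
  choose c hc hx using h
  obtain ⟨k₀, -, hk₀⟩ := exists_min_image univ c univ_nonempty
  refine ⟨c k₀ / Fintype.card ι, by have := hc k₀; positivity, fun θ => ?_⟩
  obtain ⟨k, -, hk⟩ := exists_max_image univ (fun k => sin (θ k) ^ 2) univ_nonempty
  refine (hx k θ).trans (exp_le_exp.2 (neg_le_neg ?_))
  have hsum : sinSq θ ≤ Fintype.card ι * sin (θ k) ^ 2 :=
    (sum_le_card_nsmul _ _ _ hk).trans_eq (by simp)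
  calc c k₀ / Fintype.card ι * sinSq θ
      ≤ c k₀ / Fintype.card ι * (Fintype.card ι * sin (θ k) ^ 2) := by
        have := hc k₀
        gcongr
    _ = c k₀ * sin (θ k) ^ 2 := by field_simp
    _ ≤ c k * sin (θ k) ^ 2 := by
        gcongr
        exact hk₀ k (mem_univ k)

namespace IsSaddlePoint

lemma pos (h : IsSaddlePoint S w ρ) : 0 < ρ := one_pos.trans h.one_lt

lemma sliceTransform_pos (h : IsSaddlePoint S w ρ) {ε : ℤ}
    (hε : ∃ i ∈ S, i (Fin.last e) = ε ∧ 0 < w i) : 0 < sliceTransform S w ε 0 := by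
  obtain ⟨i, hi, hiε, hwi⟩ := hε
  rw [sliceTransform_zero]
  exact sum_pos' (fun i hi => h.nonneg i (mem_filter.1 hi).1) ⟨i, mem_filter.2 ⟨hi, hiε⟩, hwi⟩

lemma sliceTransform_one_pos (h : IsSaddlePoint S w ρ) : 0 < sliceTransform S w 1 0 :=
  h.sliceTransform_pos (h.exists_forward _)

lemma sliceTransform_neg_one_div (h : IsSaddlePoint S w ρ) :
    sliceTransform S w (-1) 0 / ρ = ρ * sliceTransform S w 1 0 := by
  have := h.pos.ne'
  rw [sliceTransform_zero, sliceTransform_zero, h.balance]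
  field_simp

lemma tiltedMass_eq (h : IsSaddlePoint S w ρ) :
    tiltedMass S w ρ = sliceTransform S w 0 0 + 2 * (ρ * sliceTransform S w 1 0) := by
  rw [OrthantWalk.tiltedMass_eq h.smallSteps, h.sliceTransform_neg_one_div]
  ring

lemma tiltedMass_pos (h : IsSaddlePoint S w ρ) : 0 < tiltedMass S w ρ := by
  have := h.pos
  have := h.sliceTransform_pos h.exists_flat
  have := h.sliceTransform_one_pos
  rw [h.tiltedMass_eq]
  positivity

lemma tiltedVariance_pos (h : IsSaddlePoint S w ρ) (k : Fin (e + 1)) :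
    0 < tiltedVariance S w ρ k := by
  obtain ⟨i, hi, hik, hwi⟩ := h.exists_forward k
  have hρ := h.pos
  refine div_pos (sum_pos' (fun i hi => ?_) ⟨i, hi, ?_⟩) h.tiltedMass_pos
  · have := h.nonneg i hi
    positivity
  · rw [hik]
    positivity

lemma isBigO_im_stepSymbol (h : IsSaddlePoint S w ρ) :
    (fun θ => (stepSymbol S w ρ θ).im) =O[𝓝 0] fun θ => ‖θ‖ ^ 3 := by
  have hsin : (fun θ : Fin (e + 1) → ℝ => sin (θ (Fin.last e))) =O[𝓝 0] fun θ => ‖θ‖ :=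
    .of_norm_le fun θ => abs_sin_le_abs.trans (norm_le_pi_norm θ _)
  have hodd := ((isBigO_sliceTransform_init_sub (S := S) (w := w) 1).const_mul_left ρ).sub
    ((isBigO_sliceTransform_init_sub (S := S) (w := w) (-1)).const_mul_left ρ⁻¹)
  have hprod := (hodd.mul hsin).const_mul_left (tiltedMass S w ρ)⁻¹
  simp only [← pow_succ] at hprod
  refine hprod.congr_left fun θ => ?_
  rw [stepSymbol, Complex.div_ofReal_im, im_tiltedSymbol]
  have := h.sliceTransform_neg_one_div
  rw [div_eq_inv_mul] at this
  rw [mul_sub, mul_sub, this]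
  ring

lemma abs_mul_add_abs_div_le (h : IsSaddlePoint S w ρ) (θ : Fin e → ℝ) :
    |ρ * sliceTransform S w 1 θ| + |sliceTransform S w (-1) θ / ρ| ≤
      2 * (ρ * sliceTransform S w 1 0) := by
  have hρ := h.pos
  rw [abs_mul, abs_div, abs_of_pos hρ, two_mul]
  nth_rw 2 [← h.sliceTransform_neg_one_div]
  gcongr
  exacts [abs_sliceTransform_le_zero h.nonneg 1 θ, abs_sliceTransform_le_zero h.nonneg (-1) θ]

lemma sq_mul_norm_stepSymbol_le (h : IsSaddlePoint S w ρ) (θ : Fin (e + 1) → ℝ) :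
    (tiltedMass S w ρ * ‖stepSymbol S w ρ θ‖) ^ 2 ≤ sliceTransform S w 0 0 ^ 2 +
      2 * (sliceTransform S w 0 (Fin.init θ) * (ρ * sliceTransform S w 1 (Fin.init θ) +
        sliceTransform S w (-1) (Fin.init θ) / ρ)) * cos (θ (Fin.last e)) +
      (2 * (ρ * sliceTransform S w 1 0)) ^ 2 := by
  have hflat := abs_le.1 (abs_sliceTransform_le_zero h.nonneg 0 (Fin.init θ))
  rw [stepSymbol, norm_div, Complex.norm_of_nonneg h.tiltedMass_pos.le,
    mul_div_cancel₀ _ h.tiltedMass_pos.ne']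
  refine (norm_tiltedSymbol_sq_le _ _ _ _ _).trans ?_
  exact add_le_add (add_le_add (sq_le_sq' hflat.1 hflat.2) le_rfl)
    (pow_le_pow_left₀ (by positivity) (h.abs_mul_add_abs_div_le _) 2)

lemma sq_norm_stepSymbol_le_one_sub (h : IsSaddlePoint S w ρ) (θ : Fin (e + 1) → ℝ) :
    ‖stepSymbol S w ρ θ‖ ^ 2 ≤ 1 - 2 * (sliceTransform S w 0 0 * (ρ * sliceTransform S w 1 0) /
      tiltedMass S w ρ ^ 2 * sin (θ (Fin.last e)) ^ 2) := by
  have hsq := h.sq_mul_norm_stepSymbol_le θ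
  have hmass := h.tiltedMass_eq
  have hM := h.tiltedMass_pos
  have hside := (abs_add_le _ _).trans (h.abs_mul_add_abs_div_le (Fin.init θ))
  have hflat := abs_sliceTransform_le_zero h.nonneg 0 (Fin.init θ)
  have hQ := h.sliceTransform_pos h.exists_flat
  have hL := mul_pos h.pos h.sliceTransform_one_pos
  set L := ρ * sliceTransform S w 1 0
  set x := sliceTransform S w 0 (Fin.init θ)
  set y := ρ * sliceTransform S w 1 (Fin.init θ) + sliceTransform S w (-1) (Fin.init θ) / ρ
  have hcross : x * y * cos (θ (Fin.last e)) ≤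
      sliceTransform S w 0 0 * (2 * L) * (1 - sin (θ (Fin.last e)) ^ 2 / 2) := by
    refine (le_abs_self _).trans ?_
    rw [abs_mul, abs_mul]
    gcongr
    exact abs_cos_le_one_sub _
  refine le_of_mul_le_mul_left ?_ (pow_pos hM 2)
  rw [← mul_pow]
  refine hsq.trans ?_
  field_simp
  rw [hmass]
  linarith

lemma norm_stepSymbol_le_exp_last (h : IsSaddlePoint S w ρ) :
    ∃ c > 0, ∀ θ, ‖stepSymbol S w ρ θ‖ ≤ exp (-(c * sin (θ (Fin.last e)) ^ 2)) := by
  have := h.pos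
  have := h.sliceTransform_pos h.exists_flat
  have := h.sliceTransform_one_pos
  have := h.tiltedMass_pos
  refine ⟨sliceTransform S w 0 0 * (ρ * sliceTransform S w 1 0) / tiltedMass S w ρ ^ 2,
    by positivity, fun θ => le_of_sq_le_sq ?_ (exp_pos _).le⟩
  refine (h.sq_norm_stepSymbol_le_one_sub θ).trans ((one_sub_le_exp_neg _).trans_eq ?_)
  rw [← exp_nat_mul, Nat.cast_two, mul_neg]

lemma norm_stepSymbol_le_exp_castSucc (h : IsSaddlePoint S w ρ) (k : Fin e) :
    ∃ c > 0, ∀ θ, ‖stepSymbol S w ρ θ‖ ≤ exp (-(c * sin (θ k.castSucc) ^ 2)) := by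
  refine ⟨tiltedVariance S w ρ k.castSucc / 2, half_pos (h.tiltedVariance_pos _), fun θ => ?_⟩
  refine (norm_stepSymbol_le_one_sub h.smallSteps h.nonneg h.pos h.tiltedMass_pos k θ).trans ?_
  rw [div_mul_eq_mul_div]
  exact one_sub_le_exp_neg _

lemma exists_norm_stepSymbol_le_exp (h : IsSaddlePoint S w ρ) :
    ∃ c > 0, ∀ θ, ‖stepSymbol S w ρ θ‖ ≤ exp (-(c * sinSq θ)) :=
  exists_le_exp_neg_sinSq fun k =>
    k.lastCases h.norm_stepSymbol_le_exp_last h.norm_stepSymbol_le_exp_castSucc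

lemma exists_norm_stepSymbol_le_of_cos_nonpos (h : IsSaddlePoint S w ρ) :
    ∃ r < 1, ∀ θ, ‖(Fin.init θ : Fin e → ℝ)‖ ≤ π / 2 → cos (θ (Fin.last e)) ≤ 0 →
      ‖stepSymbol S w ρ θ‖ ≤ r := by
  have hρ := h.pos
  have hQ := h.sliceTransform_pos h.exists_flat
  have hB := h.sliceTransform_one_pos
  have hM := h.tiltedMass_pos
  refine ⟨√(sliceTransform S w 0 0 ^ 2 + (2 * (ρ * sliceTransform S w 1 0)) ^ 2) /
    tiltedMass S w ρ, ?_, fun θ hθ hcos => ?_⟩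
  · rw [div_lt_one hM, sqrt_lt' hM, h.tiltedMass_eq, add_sq]
    have : 0 < 2 * sliceTransform S w 0 0 * (2 * (ρ * sliceTransform S w 1 0)) := by positivity
    linarith
  · have hslice (ε : ℤ) := sliceTransform_nonneg h.smallSteps h.nonneg ε hθ
    have hcross : 0 ≤ sliceTransform S w 0 (Fin.init θ) * (ρ * sliceTransform S w 1 (Fin.init θ) +
        sliceTransform S w (-1) (Fin.init θ) / ρ) :=
      mul_nonneg (hslice 0) (add_nonneg (mul_nonneg hρ.le (hslice 1)) (div_nonneg (hslice _) hρ.le))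
    rw [le_div_iff₀' hM]
    refine le_sqrt_of_sq_le ((h.sq_mul_norm_stepSymbol_le θ).trans ?_)
    linarith [mul_nonpos_of_nonneg_of_nonpos hcross hcos]

end IsSaddlePoint

end SaddlePoint

/-! ### The amplitude of the tilted walk -/

section TruncatedInv

open Filter Topology

/-- A continuous function which agrees with `x⁻¹` as soon as `b / 2 ≤ |x|`. It replaces the inverse
of the up-slice of the walk, which may vanish away from the saddle point. -/
noncomputable def truncatedInv (b x : ℝ) : ℝ := x / max (x ^ 2) ((b / 2) ^ 2)

variable {b x : ℝ}

lemma continuous_truncatedInv (hb : b ≠ 0) : Continuous (truncatedInv b) :=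
  continuous_id.div (by fun_prop) fun _ => (lt_max_of_lt_right (by positivity)).ne'

lemma truncatedInv_eq_inv (hb : 0 ≤ b) (hx : b / 2 ≤ |x|) : truncatedInv b x = x⁻¹ := by
  rw [truncatedInv, max_eq_left (sq_le_sq.2 (by rwa [abs_of_nonneg (by positivity : 0 ≤ b / 2)]))]
  field

lemma abs_truncatedInv_le (hb : 0 < b) : |truncatedInv b x| ≤ 2 / b := by
  rw [truncatedInv, abs_div, abs_of_pos (lt_max_of_lt_right (by positivity : 0 < (b / 2) ^ 2)),
    div_le_div_iff₀ (lt_max_of_lt_right (by positivity)) hb]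
  nlinarith [le_max_left (x ^ 2) ((b / 2) ^ 2), le_max_right (x ^ 2) ((b / 2) ^ 2),
    sq_nonneg (|x| - b / 2), sq_abs x]

lemma truncatedInv_mul_self_nonneg : 0 ≤ truncatedInv b x * x := by
  rw [truncatedInv, div_mul_eq_mul_div]
  exact div_nonneg (mul_self_nonneg x) (le_max_of_le_left (sq_nonneg x))

lemma truncatedInv_mul_self_le_one : truncatedInv b x * x ≤ 1 := by
  rw [truncatedInv, div_mul_eq_mul_div, ← sq]
  exact div_le_one_of_le₀ (le_max_left _ _) (le_max_of_le_left (sq_nonneg x))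

lemma differentiableAt_truncatedInv (hb : 0 < b) : DifferentiableAt ℝ (truncatedInv b) b := by
  refine (differentiableAt_inv hb.ne').congr_of_eventuallyEq ?_
  filter_upwards [lt_mem_nhds (half_lt_self hb)] with x hx
  exact truncatedInv_eq_inv hb.le (hx.le.trans (le_abs_self x))

end TruncatedInv

section Amplitude

open Real Asymptotics Filter Topology

variable {e : ℕ} (S : Finset (Fin (e + 1) → ℤ)) (w : (Fin (e + 1) → ℤ) → ℝ) (ρ : ℝ)

/-- The factor in front of the powers of `stepSymbol` in the integral representation of the number
of walks. -/
noncomputable def amplitude (θ : Fin (e + 1) → ℝ) : ℂ :=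
  ((∏ k : Fin e, (1 + cos (θ k.castSucc))) *
    truncatedInv (sliceTransform S w 1 0) (sliceTransform S w 1 (Fin.init θ)) : ℝ) *
      halfLineKernel ρ⁻¹ (θ (Fin.last e))

/-- The value of `amplitude` at the saddle point. -/
noncomputable def amplitudeZero : ℝ :=
  2 ^ e * (sliceTransform S w 1 0)⁻¹ * (ρ⁻¹ / (1 - ρ⁻¹) ^ 2)

variable {S w ρ}

lemma one_add_cos_le_sin_sq {t : ℝ} (ht : cos t ≤ 0) : 1 + cos t ≤ sin t ^ 2 := by
  nlinarith [neg_one_le_cos t, sin_sq_add_cos_sq t]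

lemma isBigO_one_add_cos_sub_two {ι : Type*} [Fintype ι] (k : ι) :
    (fun θ : ι → ℝ => 1 + cos (θ k) - 2) =O[𝓝 0] fun θ => ‖θ‖ ^ 2 := by
  have hsq : (fun θ : ι → ℝ => 1 + cos (θ k) - 2) =O[𝓝 0] fun θ => θ k ^ 2 :=
    .of_norm_le fun θ => by
      rw [norm_eq_abs, abs_le]
      constructor <;> nlinarith [one_sub_sq_div_two_le_cos (x := θ k), cos_le_one (θ k)]
  exact hsq.trans ((isBigO_eval_norm k).pow 2)

lemma isBigO_prod_one_add_cos_sub :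
    (fun θ : Fin (e + 1) → ℝ => ∏ k : Fin e, (1 + cos (θ k.castSucc)) - 2 ^ e) =O[𝓝 0]
      fun θ => ‖θ‖ ^ 2 := by
  have hone : (fun θ : Fin (e + 1) → ℝ => ‖θ‖ ^ 2) =O[𝓝 0] fun _ => (1 : ℝ) :=
    (Continuous.tendsto (by fun_prop) 0).isBigO_one ℝ
  simpa using isBigO_prod_sub_prod (univ : Finset (Fin e)) (a := fun _ => (2 : ℝ))
    (fun k _ => isBigO_one_add_cos_sub_two k.castSucc) hone

lemma prod_one_add_cos_mem_Icc (θ : Fin e → ℝ) (s : Finset (Fin e)) :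
    ∏ k ∈ s, (1 + cos (θ k)) ∈ Set.Icc 0 (2 ^ e : ℝ) := by
  have hnonneg (k : Fin e) : 0 ≤ 1 + cos (θ k) := by linarith [neg_one_le_cos (θ k)]
  refine ⟨prod_nonneg fun k _ => hnonneg k, ?_⟩
  calc ∏ k ∈ s, (1 + cos (θ k)) ≤ ∏ _k ∈ s, 2 :=
        prod_le_prod (fun k _ => hnonneg k) fun k _ => by linarith [cos_le_one (θ k)]
    _ = 2 ^ #s := prod_const 2
    _ ≤ 2 ^ e := pow_le_pow_right₀ one_le_two (s.card_le_univ.trans_eq (Fintype.card_fin e))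

lemma prod_one_add_cos_le_of_not_norm_le {θ : Fin e → ℝ} (hπ : ‖θ‖ ≤ π) (hθ : π / 2 < ‖θ‖) :
    ∏ k, (1 + cos (θ k)) ≤ 2 ^ e * sinSq θ := by
  obtain ⟨k, hk⟩ : ∃ k, π / 2 < |θ k| := by
    simpa [pi_norm_le_iff_of_nonneg pi_div_two_pos.le] using hθ.not_ge
  have hcos : cos (θ k) ≤ 0 := by
    rw [← cos_abs]
    exact cos_nonpos_of_pi_div_two_le_of_le hk.le
      (by linarith [(norm_le_pi_norm θ k).trans hπ, pi_pos, norm_eq_abs (θ k)])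
  have hrest := prod_one_add_cos_mem_Icc θ (univ.erase k)
  rw [← mul_prod_erase univ _ (mem_univ k), mul_comm]
  exact mul_le_mul hrest.2 ((one_add_cos_le_sin_sq hcos).trans (sin_sq_le_sinSq θ k))
    (by linarith [neg_one_le_cos (θ k)]) (by positivity)

namespace IsSaddlePoint

lemma inv_lt_one (h : IsSaddlePoint S w ρ) : ρ⁻¹ < 1 := inv_lt_one_of_one_lt₀ h.one_lt

lemma continuous_amplitude (h : IsSaddlePoint S w ρ) : Continuous (amplitude S w ρ) := by
  have htrunc := (continuous_truncatedInv h.sliceTransform_one_pos.ne').comp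
    ((continuous_sliceTransform S w 1).comp continuous_init)
  have hprod : Continuous fun θ : Fin (e + 1) → ℝ => ∏ k : Fin e, (1 + cos (θ k.castSucc)) := by
    fun_prop
  exact (Complex.continuous_ofReal.comp (hprod.mul htrunc)).mul
    ((continuous_halfLineKernel (inv_nonneg.2 h.pos.le) h.inv_lt_one).comp (continuous_apply _))

lemma isBigO_truncatedInv_sub (h : IsSaddlePoint S w ρ) :
    (fun θ : Fin (e + 1) → ℝ =>
      truncatedInv (sliceTransform S w 1 0) (sliceTransform S w 1 (Fin.init θ)) -
        (sliceTransform S w 1 0)⁻¹) =O[𝓝 0] fun θ => ‖θ‖ ^ 2 := by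
  have hB := h.sliceTransform_one_pos
  have hlim : Tendsto (fun θ : Fin (e + 1) → ℝ => sliceTransform S w 1 (Fin.init θ)) (𝓝 0)
      (𝓝 (sliceTransform S w 1 0)) :=
    ((continuous_sliceTransform S w 1).tendsto 0).comp tendsto_init_zero
  have hinv := truncatedInv_eq_inv hB.le ((half_le_self hB.le).trans (le_abs_self _))
  have hdiff := ((differentiableAt_truncatedInv hB).isBigO_sub).comp_tendsto hlim
  rw [hinv] at hdiff
  exact hdiff.trans (isBigO_sliceTransform_init_sub 1)

lemma isBigO_prefactor_sub (h : IsSaddlePoint S w ρ) :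
    (fun θ : Fin (e + 1) → ℝ => (∏ k : Fin e, (1 + cos (θ k.castSucc))) *
      truncatedInv (sliceTransform S w 1 0) (sliceTransform S w 1 (Fin.init θ)) -
        2 ^ e * (sliceTransform S w 1 0)⁻¹) =O[𝓝 0] fun θ => ‖θ‖ ^ 2 :=
  isBigO_mul_sub_mul isBigO_prod_one_add_cos_sub h.isBigO_truncatedInv_sub
    ((Continuous.tendsto (by fun_prop) 0).isBigO_one ℝ)

lemma isBigO_re_amplitude_sub (h : IsSaddlePoint S w ρ) :
    (fun θ => (amplitude S w ρ θ).re - amplitudeZero S w ρ) =O[𝓝 0] fun θ => ‖θ‖ ^ 2 := by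
  have hkernel : (fun θ : Fin (e + 1) → ℝ => (halfLineKernel ρ⁻¹ (θ (Fin.last e))).re -
      ρ⁻¹ / (1 - ρ⁻¹) ^ 2) =O[𝓝 0] fun θ => ‖θ‖ ^ 2 :=
    (IsBigO.of_bound _ <| .of_forall fun θ => by
      simpa using abs_re_halfLineKernel_sub_le (inv_nonneg.2 h.pos.le) h.inv_lt_one
        (θ (Fin.last e))).trans ((isBigO_eval_norm (Fin.last e)).pow 2)
  simpa only [amplitude, amplitudeZero, Complex.re_ofReal_mul] using
    isBigO_mul_sub_mul h.isBigO_prefactor_sub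
    hkernel ((Continuous.tendsto (by fun_prop) 0).isBigO_one ℝ)

lemma isBigO_im_amplitude (h : IsSaddlePoint S w ρ) :
    (fun θ => (amplitude S w ρ θ).im) =O[𝓝 0] fun θ => ‖θ‖ := by
  have hone : (fun θ : Fin (e + 1) → ℝ => ‖θ‖ ^ 2) =O[𝓝 0] fun _ => (1 : ℝ) :=
    (Continuous.tendsto (by fun_prop) 0).isBigO_one ℝ
  have hprefactor := (h.isBigO_prefactor_sub.trans hone).add
    (isBigO_const_const (2 ^ e * (sliceTransform S w 1 0)⁻¹) one_ne_zero (𝓝 0))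
  have hkernel : (fun θ : Fin (e + 1) → ℝ => (halfLineKernel ρ⁻¹ (θ (Fin.last e))).im) =O[𝓝 0]
      fun θ => ‖θ‖ :=
    (IsBigO.of_bound _ <| .of_forall fun θ => by
      simpa using abs_im_halfLineKernel_le (inv_nonneg.2 h.pos.le) h.inv_lt_one
        (θ (Fin.last e))).trans (isBigO_eval_norm (Fin.last e))
  simpa only [amplitude, Complex.im_ofReal_mul, sub_add_cancel, one_mul] using
    hprefactor.mul hkernel

lemma exists_norm_amplitude_le (h : IsSaddlePoint S w ρ) :
    ∃ C, ∀ θ, ‖θ‖ ≤ π → π / 2 < ‖(Fin.init θ : Fin e → ℝ)‖ →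
      ‖amplitude S w ρ θ‖ ≤ C * sinSq θ := by
  have hB := h.sliceTransform_one_pos
  refine ⟨2 ^ e * (2 / sliceTransform S w 1 0) * (ρ⁻¹ / (1 - ρ⁻¹) ^ 2), fun θ hπ hθ => ?_⟩
  have hprod := prod_one_add_cos_le_of_not_norm_le ((norm_init_le θ).trans hπ) hθ
  have hsinSq : sinSq (Fin.init θ : Fin e → ℝ) ≤ sinSq θ := by
    rw [sinSq, sinSq, Fin.sum_univ_castSucc]
    exact le_add_of_nonneg_right (sq_nonneg _)
  have hkernel := norm_halfLineKernel_le (inv_nonneg.2 h.pos.le) h.inv_lt_one (θ (Fin.last e))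
  have htrunc : |truncatedInv (sliceTransform S w 1 0) (sliceTransform S w 1 (Fin.init θ))| ≤
      2 / sliceTransform S w 1 0 := abs_truncatedInv_le hB
  have hnonneg := (prod_one_add_cos_mem_Icc (Fin.init θ) univ).1
  rw [amplitude, norm_mul, Complex.norm_real, norm_mul, norm_eq_abs, norm_eq_abs]
  calc _ ≤ 2 ^ e * sinSq θ * (2 / sliceTransform S w 1 0) * (ρ⁻¹ / (1 - ρ⁻¹) ^ 2) := by
        have := sinSq_nonneg θ
        gcongr
        exact (abs_of_nonneg hnonneg).trans_le (hprod.trans (by gcongr))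
    _ = _ := by ring

lemma isLaplacePair (h : IsSaddlePoint S w ρ) : IsLaplacePair (tiltedVariance S w ρ)
    (amplitudeZero S w ρ) (stepSymbol S w ρ) (amplitude S w ρ) where
  continuous_base := continuous_stepSymbol S w ρ
  continuous_amplitude := h.continuous_amplitude
  re_base := isBigO_re_stepSymbol h.smallSteps h.tiltedMass_pos.ne'
  im_base := h.isBigO_im_stepSymbol
  re_amplitude := h.isBigO_re_amplitude_sub
  im_amplitude := h.isBigO_im_amplitude
  norm_base_le := h.exists_norm_stepSymbol_le_exp
  far := by
    obtain ⟨r, hr, hbase⟩ := h.exists_norm_stepSymbol_le_of_cos_nonpos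
    obtain ⟨C, hamplitude⟩ := h.exists_norm_amplitude_le
    refine ⟨r, hr, C, fun θ hπ hθ => ?_⟩
    rcases le_or_gt ‖(Fin.init θ : Fin e → ℝ)‖ (π / 2) with hinit | hinit
    · have hlast : π / 2 < |θ (Fin.last e)| := by
        by_contra! hlast
        refine hθ.not_ge ((pi_norm_le_iff_of_nonneg pi_div_two_pos.le).2 fun k => ?_)
        exact k.lastCases hlast fun k => (norm_le_pi_norm (Fin.init θ : Fin e → ℝ) k).trans hinit
      refine .inl (hbase θ hinit ?_)
      rw [← cos_abs]
      exact cos_nonpos_of_pi_div_two_le_of_le hlast.le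
        (by linarith [(norm_le_pi_norm θ (Fin.last e)).trans hπ, pi_pos,
          norm_eq_abs (θ (Fin.last e))])
    · exact .inr (hamplitude θ hπ hinit)

end IsSaddlePoint

end Amplitude

/-! ### Asymptotics of the number of walks -/

section Asymptotics

open Real Asymptotics Filter Topology MeasureTheory

variable {e : ℕ} {S : Finset (Fin (e + 1) → ℤ)} {w : (Fin (e + 1) → ℤ) → ℝ} {ρ : ℝ}

variable (S w ρ) in
/-- The integral which carries the whole asymptotic expansion of the number of walks of length
`N - 1`. -/
noncomputable def saddleIntegral (N : ℕ) : ℝ :=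
  ∫ θ, (amplitude S w ρ θ * stepSymbol S w ρ θ ^ N).re ∂torusMeasure (Fin (e + 1))

lemma isBigO_div_add_one_rpow_sub_one (p : ℝ) :
    (fun n : ℕ => ((n : ℝ) / (n + 1)) ^ p - 1) =O[atTop] fun n => (n : ℝ)⁻¹ := by
  have hdiff : DifferentiableAt ℝ (fun x : ℝ => x ^ p) 1 :=
    differentiableAt_id.rpow_const (.inl one_ne_zero)
  have hlim := tendsto_natCast_div_add_atTop (1 : ℝ)
  have hrpow := hdiff.isBigO_sub.comp_tendsto hlim
  simp only [Function.comp_def, one_rpow] at hrpow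
  refine hrpow.trans (.of_bound 1 <| (eventually_ge_atTop 1).mono fun n hn => ?_)
  have : (0 : ℝ) < n := Nat.cast_pos.2 hn
  have hsub : (n : ℝ) / (n + 1) - 1 = -(n + 1 : ℝ)⁻¹ := by field
  rw [hsub, norm_neg, one_mul, norm_of_nonneg (by positivity), norm_of_nonneg (by positivity)]
  gcongr
  linarith

lemma isBigO_mul_rpow_sub_of_add_one {x : ℕ → ℝ} {K p : ℝ}
    (h : (fun n : ℕ => x n * (n + 1 : ℝ) ^ p - K) =O[atTop] fun n => (n : ℝ)⁻¹) :
    (fun n : ℕ => x n * (n : ℝ) ^ p - K) =O[atTop] fun n => (n : ℝ)⁻¹ := by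
  have hone : (fun n : ℕ => (n : ℝ)⁻¹) =O[atTop] fun _ => (1 : ℝ) :=
    tendsto_inv_atTop_nhds_zero_nat.isBigO_one ℝ
  have hmul := isBigO_mul_sub_mul h (isBigO_div_add_one_rpow_sub_one p) hone
  refine hmul.congr_left fun n => ?_
  have hn : (0 : ℝ) < n + 1 := by positivity
  rw [mul_assoc, ← mul_rpow hn.le (by positivity), mul_div_cancel₀ _ hn.ne', mul_one]

lemma add_one_rpow_half_add_one (m n : ℕ) :
    (n + 1 : ℝ) ^ ((m : ℝ) / 2 + 1) = √((n + 1 : ℕ) : ℝ) ^ m * (n + 1) := by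
  rw [rpow_add_one (by positivity), rpow_div_two_eq_sqrt _ (by positivity), rpow_natCast,
    Nat.cast_add_one]

lemma isBigO_pow_mul_rpow {r : ℝ} (hr : |r| < 1) (p : ℝ) :
    (fun n : ℕ => r ^ n * (n + 1 : ℝ) ^ p) =O[atTop] fun n => (n : ℝ)⁻¹ := by
  obtain ⟨k, hk⟩ := exists_nat_ge p
  have hdecay := (tendsto_pow_const_mul_const_pow_of_abs_lt_one (k + 1)
    (abs_abs r ▸ hr)).eventually_le_const one_pos
  refine .of_bound (2 ^ k) ?_
  filter_upwards [hdecay, eventually_ge_atTop 1] with n hdecay hn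
  have hn1 : (1 : ℝ) ≤ n := Nat.one_le_cast.2 hn
  rw [norm_mul, norm_pow, norm_eq_abs r, norm_inv, Real.norm_natCast,
    norm_of_nonneg (by positivity), ← div_eq_mul_inv, le_div_iff₀ (by positivity)]
  calc |r| ^ n * (n + 1 : ℝ) ^ p * n ≤ |r| ^ n * (2 * n : ℝ) ^ k * n := by
        gcongr
        rw [← rpow_natCast]
        exact (rpow_le_rpow_of_exponent_le (by linarith) hk).trans
          (rpow_le_rpow (by positivity) (by linarith) k.cast_nonneg)
    _ = 2 ^ k * (n ^ (k + 1) * |r| ^ n) := by ring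
    _ ≤ 2 ^ k := mul_le_of_le_one_right (by positivity) hdecay

namespace IsSaddlePoint

lemma integral_circle_amplitude_mul (h : IsSaddlePoint S w ρ) (n : ℕ) (θ : Fin e → ℝ) :
    ∫ φ, (amplitude S w ρ (Fin.snoc θ φ) * stepSymbol S w ρ (Fin.snoc θ φ) ^ (n + 1)).re
        ∂circleMeasure =
      (∏ k, (1 + cos (θ k))) * (truncatedInv (sliceTransform S w 1 0) (sliceTransform S w 1 θ) *
        sliceTransform S w 1 θ) * (n + 1) * sliceCount S w n θ / tiltedMass S w ρ ^ (n + 1) := by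
  have hint := mul_halfLineCount_zero_eq_integral (sliceTransform S w (-1) θ)
    (sliceTransform S w 1 θ) (sliceTransform S w 0 θ) h.one_lt n
  have hre (φ : ℝ) : (amplitude S w ρ (Fin.snoc θ φ) *
      stepSymbol S w ρ (Fin.snoc θ φ) ^ (n + 1)).re = (∏ k, (1 + cos (θ k))) *
        truncatedInv (sliceTransform S w 1 0) (sliceTransform S w 1 θ) /
          tiltedMass S w ρ ^ (n + 1) * (halfLineKernel ρ⁻¹ φ * tiltedSymbol
            (sliceTransform S w (-1) θ) (sliceTransform S w 1 θ) (sliceTransform S w 0 θ) ρ φ ^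
              (n + 1)).re := by
    simp only [amplitude, stepSymbol, Fin.init_snoc, Fin.snoc_castSucc, Fin.snoc_last]
    rw [← Complex.re_ofReal_mul, div_pow]
    push_cast
    congr 1
    ring
  simp only [hre, integral_const_mul, ← hint, sliceCount]
  ring

lemma tiltedMass_pow_mul_saddleIntegral (h : IsSaddlePoint S w ρ) (n : ℕ) :
    tiltedMass S w ρ ^ (n + 1) * saddleIntegral S w ρ (n + 1) =
      (n + 1) * ∫ θ, (∏ k, (1 + cos (θ k))) *
        (truncatedInv (sliceTransform S w 1 0) (sliceTransform S w 1 θ) * sliceTransform S w 1 θ) *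
          sliceCount S w n θ ∂torusMeasure (Fin e) := by
  have hM := h.tiltedMass_pos.ne'
  have hcont : Continuous fun θ => (amplitude S w ρ θ * stepSymbol S w ρ θ ^ (n + 1)).re :=
    Complex.continuous_re.comp
      (h.continuous_amplitude.mul ((continuous_stepSymbol S w ρ).pow (n + 1)))
  rw [saddleIntegral, integral_torusMeasure_snoc hcont]
  simp only [h.integral_circle_amplitude_mul]
  rw [← integral_const_mul, ← integral_const_mul]
  congr 1 with θ
  field

lemma abs_sliceCount_le (h : IsSaddlePoint S w ρ) (n : ℕ) {θ : Fin e → ℝ}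
    (hθ : |sliceTransform S w 1 θ| ≤ sliceTransform S w 1 0 / 2) :
    |sliceCount S w n θ| ≤ (tiltedMass S w ρ - ρ * sliceTransform S w 1 0 / 2) ^ n := by
  have hρ := h.pos
  have hslice (ε : ℤ) := abs_sliceTransform_le_zero h.nonneg ε θ
  refine (abs_halfLineCount_le _ _ _ h.one_lt.le n 0).trans ?_
  rw [zpow_zero, one_mul]
  refine pow_le_pow_left₀ (by positivity) ?_ n
  rw [OrthantWalk.tiltedMass_eq h.smallSteps]
  linarith [hslice 0, div_le_div_of_nonneg_right (hslice (-1)) hρ.le,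
    mul_le_mul_of_nonneg_left hθ hρ.le]

lemma tiltedMass_sub_half_pos (h : IsSaddlePoint S w ρ) :
    0 < tiltedMass S w ρ - ρ * sliceTransform S w 1 0 / 2 := by
  rw [h.tiltedMass_eq]
  linarith [h.sliceTransform_pos h.exists_flat, mul_pos h.pos h.sliceTransform_one_pos]

lemma norm_remainder_le (h : IsSaddlePoint S w ρ) (n : ℕ) (θ : Fin e → ℝ) :
    ‖(∏ k, (1 + cos (θ k))) * (1 - truncatedInv (sliceTransform S w 1 0) (sliceTransform S w 1 θ) *
      sliceTransform S w 1 θ) * sliceCount S w n θ‖ ≤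
        2 ^ e * (tiltedMass S w ρ - ρ * sliceTransform S w 1 0 / 2) ^ n := by
  have hB := h.sliceTransform_one_pos
  have hprod := prod_one_add_cos_mem_Icc θ univ
  have hpos := h.tiltedMass_sub_half_pos
  rcases le_total (sliceTransform S w 1 0 / 2) |sliceTransform S w 1 θ| with hθ | hθ
  · have hne : sliceTransform S w 1 θ ≠ 0 := abs_pos.1 ((half_pos hB).trans_le hθ)
    rw [truncatedInv_eq_inv hB.le hθ, inv_mul_cancel₀ hne, sub_self, mul_zero, zero_mul, norm_zero]
    positivity
  · rw [norm_mul, norm_mul, norm_of_nonneg hprod.1, norm_of_nonneg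
      (sub_nonneg.2 truncatedInv_mul_self_le_one)]
    refine mul_le_mul ?_ (h.abs_sliceCount_le n hθ) (norm_nonneg _) (by positivity)
    exact (mul_le_of_le_one_right hprod.1
      (sub_le_self _ truncatedInv_mul_self_nonneg)).trans hprod.2

lemma abs_weightedWalkCount_sub_le (h : IsSaddlePoint S w ρ) (n : ℕ) :
    |(n + 1) * weightedWalkCount (e + 1) S w n -
      tiltedMass S w ρ ^ (n + 1) * saddleIntegral S w ρ (n + 1)| ≤
        (n + 1) * (2 ^ e * (tiltedMass S w ρ - ρ * sliceTransform S w 1 0 / 2) ^ n) := by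
  have hB := h.sliceTransform_one_pos.ne'
  have hcount := continuous_sliceCount S w n
  have hslice := continuous_sliceTransform S w 1
  have htrunc := (continuous_truncatedInv hB).comp hslice
  have hremainder := norm_integral_le_of_norm_le_const (μ := torusMeasure (Fin e))
    (.of_forall (h.norm_remainder_le n))
  rw [h.tiltedMass_pow_mul_saddleIntegral, ← mul_sub, abs_mul, abs_of_nonneg (by positivity),
    weightedWalkCount_eq_integral h.smallSteps h.axisSymmetric, ← integral_sub
      (integrable_torusMeasure (by fun_prop)) (integrable_torusMeasure (by fun_prop))]
  rw [probReal_univ, mul_one] at hremainder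
  refine mul_le_mul_of_nonneg_left (le_of_eq_of_le ?_ hremainder) (by positivity)
  rw [← norm_eq_abs]
  congr 2 with θ
  ring

lemma isBigO_saddleIntegral (h : IsSaddlePoint S w ρ) :
    (fun n : ℕ => √((n + 1 : ℕ) : ℝ) ^ (e + 1) * saddleIntegral S w ρ (n + 1) -
      amplitudeZero S w ρ * ∏ k, (√(2 * π * tiltedVariance S w ρ k))⁻¹)
        =O[atTop] fun n => (n : ℝ)⁻¹ := by
  have hinv : (fun n : ℕ => ((n + 1 : ℕ) : ℝ)⁻¹) =O[atTop] fun n : ℕ => (n : ℝ)⁻¹ :=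
    .of_bound 1 <| (eventually_ge_atTop 1).mono fun n hn => by
      have : (0 : ℝ) < n := Nat.cast_pos.2 hn
      rw [norm_inv, norm_inv, Real.norm_natCast, Real.norm_natCast, one_mul]
      gcongr
      exact n.le_succ
  simpa only [Function.comp_def, Fintype.card_fin, saddleIntegral] using
    ((h.isLaplacePair.isBigO_integral h.tiltedVariance_pos).comp_tendsto
      (tendsto_add_atTop_nat 1)).trans hinv

lemma isBigO_weightedWalkCount_sub (h : IsSaddlePoint S w ρ) :
    (fun n : ℕ => ((n + 1) * weightedWalkCount (e + 1) S w n -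
      tiltedMass S w ρ ^ (n + 1) * saddleIntegral S w ρ (n + 1)) *
        (tiltedMass S w ρ ^ (-(n : ℤ)) * √((n + 1 : ℕ) : ℝ) ^ (e + 1))) =O[atTop]
          fun n => (n : ℝ)⁻¹ := by
  have hM := h.tiltedMass_pos
  have hpos := h.tiltedMass_sub_half_pos
  have hratio : |(tiltedMass S w ρ - ρ * sliceTransform S w 1 0 / 2) / tiltedMass S w ρ| < 1 := by
    rw [abs_of_pos (div_pos hpos hM), div_lt_one hM]
    linarith [mul_pos h.pos h.sliceTransform_one_pos]
  refine (IsBigO.of_bound (2 ^ e) (.of_forall fun n => ?_)).trans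
    (isBigO_pow_mul_rpow hratio (((e + 1 : ℕ) : ℝ) / 2 + 1))
  rw [norm_mul, norm_eq_abs, norm_of_nonneg (by positivity)]
  refine (mul_le_mul_of_nonneg_right (h.abs_weightedWalkCount_sub_le n)
    (by positivity)).trans_eq ?_
  rw [norm_of_nonneg (by positivity), add_one_rpow_half_add_one, div_pow, zpow_neg, zpow_natCast]
  field

lemma isBigO_weightedWalkCount (h : IsSaddlePoint S w ρ) :
    (fun n : ℕ => weightedWalkCount (e + 1) S w n * tiltedMass S w ρ ^ (-(n : ℤ)) *
        (n : ℝ) ^ (((e + 1 : ℕ) : ℝ) / 2 + 1) -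
      tiltedMass S w ρ * (amplitudeZero S w ρ * ∏ k, (√(2 * π * tiltedVariance S w ρ k))⁻¹))
        =O[atTop] fun n => (n : ℝ)⁻¹ := by
  have hM := h.tiltedMass_pos.ne'
  refine isBigO_mul_rpow_sub_of_add_one ?_
  refine ((h.isBigO_saddleIntegral.const_mul_left (tiltedMass S w ρ)).add
    h.isBigO_weightedWalkCount_sub).congr_left fun n => ?_
  rw [add_one_rpow_half_add_one, zpow_neg, zpow_natCast]
  field

end IsSaddlePoint

end Asymptotics

section Constant

open Real

variable {e : ℕ} (S : Finset (Fin (e + 1) → ℤ)) (w : (Fin (e + 1) → ℤ) → ℝ) (ρ : ℝ)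

/-- The tilted weight of the steps that advance in the coordinate `k`: the quantity `b_k(1,ρ)` of
the paper. -/
noncomputable def forwardMass (k : Fin (e + 1)) : ℝ :=
  ∑ i ∈ S with i k = 1, w i * ρ ^ i (Fin.last e)

/-- The constant `C_ρ` of the paper. -/
noncomputable def saddleConstant : ℝ :=
  tiltedMass S w ρ * ρ / (2 * π ^ (((e + 1 : ℕ) : ℝ) / 2) * sliceTransform S w (-1) 0 *
    (1 - 1 / ρ) ^ 2) * √(tiltedMass S w ρ ^ (e + 1) /
      (ρ * (∏ k : Fin e, forwardMass S w ρ k.castSucc) * sliceTransform S w 1 0))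

lemma prod_inv_sqrt_two_pi_mul {ι : Type*} [Fintype ι] {M : ℝ} (hM : 0 ≤ M) {x : ι → ℝ}
    (hx : ∀ k, 0 ≤ x k) : ∏ k, (√(2 * π * (2 * x k / M)))⁻¹ =
      √(M ^ Fintype.card ι / ∏ k, x k) / (2 * √π) ^ Fintype.card ι := by
  have hfactor (k : ι) : (√(2 * π * (2 * x k / M)))⁻¹ = √(M / x k) / (2 * √π) := by
    have hinv : (2 * π * (2 * x k / M))⁻¹ = M / x k / (2 ^ 2 * π) := by
      simp only [mul_inv, inv_inv, div_eq_mul_inv]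
      ring
    rw [← sqrt_inv, hinv, sqrt_div (div_nonneg hM (hx k)), sqrt_mul (by positivity),
      sqrt_sq zero_le_two]
  simp only [hfactor, prod_div_distrib, prod_const, card_univ]
  rw [← sqrt_prod _ fun k _ => div_nonneg hM (hx k), prod_div_distrib, prod_const, card_univ]

variable {S w ρ}

lemma forwardMass_last : forwardMass S w ρ (Fin.last e) = ρ * sliceTransform S w 1 0 := by
  rw [forwardMass, sliceTransform_zero, mul_sum]
  refine sum_congr rfl fun i hi => ?_
  rw [(mem_filter.1 hi).2, zpow_one, mul_comm]

lemma AxisSymmetric.sum_neg_one_eq_forwardMass {k : Fin e} (hk : AxisSymmetric S w k.castSucc) :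
    ∑ i ∈ S with i k.castSucc = -1, w i * ρ ^ i (Fin.last e) = forwardMass S w ρ k.castSucc := by
  have hsum := hk.sum_mul fun i => if i k.castSucc = -1 then ρ ^ i (Fin.last e) else 0
  simpa [forwardMass, sum_filter, neg_inj, Fin.castSucc_ne_last, (Fin.castSucc_ne_last k).symm]
    using hsum

namespace IsSaddlePoint

lemma sum_neg_one_eq_forwardMass (h : IsSaddlePoint S w ρ) (k : Fin (e + 1)) :
    ∑ i ∈ S with i k = -1, w i * ρ ^ i (Fin.last e) = forwardMass S w ρ k := by
  cases k using Fin.lastCases with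
  | cast k => exact (h.axisSymmetric k).sum_neg_one_eq_forwardMass
  | last =>
    rw [forwardMass_last, ← h.sliceTransform_neg_one_div, sliceTransform_zero, sum_div]
    refine sum_congr rfl fun i hi => ?_
    rw [(mem_filter.1 hi).2, zpow_neg_one, div_eq_mul_inv]

lemma tiltedVariance_eq (h : IsSaddlePoint S w ρ) (k : Fin (e + 1)) :
    tiltedVariance S w ρ k = 2 * forwardMass S w ρ k / tiltedMass S w ρ := by
  have hfiber (ε : ℤ) : ∑ i ∈ S with i k = ε, w i * ρ ^ i (Fin.last e) * (i k : ℝ) ^ 2 =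
      (∑ i ∈ S with i k = ε, w i * ρ ^ i (Fin.last e)) * (ε : ℝ) ^ 2 := by
    rw [sum_mul]
    exact sum_congr rfl fun i hi => by rw [(mem_filter.1 hi).2]
  rw [tiltedVariance, h.smallSteps.sum_eq_add_add k, hfiber, hfiber, hfiber,
    h.sum_neg_one_eq_forwardMass, ← forwardMass]
  congr 1
  push_cast
  ring

lemma forwardMass_nonneg (h : IsSaddlePoint S w ρ) (k : Fin (e + 1)) : 0 ≤ forwardMass S w ρ k :=
  sum_nonneg fun i hi => mul_nonneg (h.nonneg i (mem_filter.1 hi).1) (zpow_pos h.pos _).le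

lemma tiltedMass_mul_amplitudeZero_mul (h : IsSaddlePoint S w ρ) :
    tiltedMass S w ρ * (amplitudeZero S w ρ * ∏ k, (√(2 * π * tiltedVariance S w ρ k))⁻¹) =
      saddleConstant S w ρ := by
  have hρ := h.pos.ne'
  have hB := h.sliceTransform_one_pos.ne'
  have : 1 - ρ⁻¹ ≠ 0 := (sub_pos.2 h.inv_lt_one).ne'
  have hA : sliceTransform S w (-1) 0 = ρ ^ 2 * sliceTransform S w 1 0 := by
    simp only [sliceTransform_zero, h.balance]
  have hprod : ρ * (∏ k : Fin e, forwardMass S w ρ k.castSucc) * sliceTransform S w 1 0 =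
      ∏ k, forwardMass S w ρ k := by
    rw [Fin.prod_univ_castSucc, forwardMass_last]
    ring
  simp only [h.tiltedVariance_eq]
  rw [prod_inv_sqrt_two_pi_mul h.tiltedMass_pos.le h.forwardMass_nonneg, Fintype.card_fin,
    saddleConstant, hprod, amplitudeZero, hA, rpow_div_two_eq_sqrt _ pi_pos.le, rpow_natCast,
    one_div, mul_pow, pow_succ 2 e]
  field

lemma exists_abs_weightedWalkCount_sub_le (h : IsSaddlePoint S w ρ) :
    ∃ c, 0 < c ∧ ∀ n : ℕ, 1 ≤ n →
      |weightedWalkCount (e + 1) S w n * tiltedMass S w ρ ^ (-(n : ℤ)) *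
        (n : ℝ) ^ (((e + 1 : ℕ) : ℝ) / 2 + 1) - saddleConstant S w ρ| ≤ c / n := by
  have hasymptotics := h.isBigO_weightedWalkCount
  rw [h.tiltedMass_mul_amplitudeZero_mul] at hasymptotics
  obtain ⟨c, hc, hbound⟩ := Asymptotics.bound_of_isBigO_nat_atTop hasymptotics
  refine ⟨c, hc, fun n hn => ?_⟩
  have hn0 : (n : ℝ)⁻¹ ≠ 0 := inv_ne_zero (Nat.cast_ne_zero.2 (by omega))
  simpa only [norm_eq_abs, norm_inv, Nat.abs_cast, div_eq_mul_inv] using hbound hn0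

end IsSaddlePoint

lemma isSaddlePoint_sqrt (hS : HasSmallSteps S) (hw : ∀ i ∈ S, 0 ≤ w i)
    (hsym : ∀ j : Fin e, AxisSymmetric S w j.castSucc) (hforward : ∀ j, ∃ i ∈ S, i j = 1 ∧ 0 < w i)
    (hflat : ∃ i ∈ S, i (Fin.last e) = 0 ∧ 0 < w i)
    (hdrift : ∑ i ∈ S with i (Fin.last e) = 1, w i < ∑ i ∈ S with i (Fin.last e) = -1, w i) :
    IsSaddlePoint S w √((∑ i ∈ S with i (Fin.last e) = -1, w i) /
      ∑ i ∈ S with i (Fin.last e) = 1, w i) := by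
  obtain ⟨i, hi, hi1, hwi⟩ := hforward (Fin.last e)
  have hB : 0 < ∑ i ∈ S with i (Fin.last e) = 1, w i :=
    sum_pos' (fun i hi => hw i (mem_filter.1 hi).1) ⟨i, mem_filter.2 ⟨hi, hi1⟩, hwi⟩
  have hratio := (one_lt_div hB).2 hdrift
  refine ⟨hS, hw, hsym, hforward, hflat, ?_, ?_⟩
  · exact lt_sqrt_of_sq_lt (by rwa [one_pow])
  · rw [sq_sqrt (one_pos.trans hratio).le, div_mul_cancel₀ _ hB.ne']

end Constant

end OrthantWalk

theorem negative_drift_asymptotics_Q_nonzero_general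
    (d : ℕ) (hd : 1 ≤ d)
    (S : Finset (Fin d → ℤ)) (w : (Fin d → ℤ) → ℝ)
    (hS : ∀ i ∈ S, ∀ m, i m = -1 ∨ i m = 0 ∨ i m = 1)
    (hw : ∀ i ∈ S, 0 ≤ w i)
    (hsym : ∀ j : Fin d, (j : ℕ) < d - 1 → ∀ i ∈ S,
      Function.update i j (-(i j)) ∈ S ∧ w (Function.update i j (-(i j))) = w i)
    (hforward : ∀ j, ∃ i ∈ S, i j = 1 ∧ 0 < w i)
    (A1 B1 Q1 : ℝ)
    (hA1 : A1 = ∑ i ∈ S with i ⟨d - 1, by omega⟩ = -1, w i)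
    (hB1 : B1 = ∑ i ∈ S with i ⟨d - 1, by omega⟩ = 1, w i)
    (hQ1 : Q1 = ∑ i ∈ S with i ⟨d - 1, by omega⟩ = 0, w i)
    (hdrift : B1 < A1)
    (hQ : ∃ i ∈ S, i ⟨d - 1, by omega⟩ = 0 ∧ 0 < w i)
    (ρ Sρ Cρ : ℝ)
    (hρ : ρ = Real.sqrt (A1 / B1))
    (hSρ : Sρ = A1 / ρ + Q1 + ρ * B1)
    (hCρ : Cρ = (Sρ * ρ / (2 * Real.pi ^ ((d : ℝ) / 2) * A1 * (1 - 1 / ρ) ^ 2))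
        * Real.sqrt (Sρ ^ d /
            (ρ * (∏ j with (j : Fin d).val < d - 1,
                    ∑ i ∈ S with i j = 1, w i * ρ ^ i ⟨d - 1, by omega⟩) * B1))) :
    ∃ c : ℝ, 0 < c ∧ ∀ n : ℕ, 1 ≤ n →
      |weightedWalkCount d S w n * Sρ ^ (-(n : ℤ)) * (n : ℝ) ^ ((d : ℝ) / 2 + 1) - Cρ|
        ≤ c / n := by
  obtain ⟨e, rfl⟩ : ∃ e, d = e + 1 := ⟨d - 1, by omega⟩
  have h : OrthantWalk.IsSaddlePoint S w ρ := by
    subst hρ hA1 hB1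
    exact OrthantWalk.isSaddlePoint_sqrt hS hw (fun j => hsym j.castSucc (by simp)) hforward hQ
      hdrift
  have hmass : Sρ = OrthantWalk.tiltedMass S w ρ := by
    rw [OrthantWalk.tiltedMass_eq hS, hSρ, hA1, hB1, hQ1]
    simp only [OrthantWalk.sliceTransform_zero]
    rfl
  have hconstant : Cρ = OrthantWalk.saddleConstant S w ρ := by
    simp only [hCρ, hmass, hA1, hB1, OrthantWalk.saddleConstant, OrthantWalk.forwardMass,
      OrthantWalk.sliceTransform_zero, Finset.prod_filter, Fin.prod_univ_castSucc,
      Fin.val_castSucc, Fin.is_lt, Fin.val_last, Nat.add_sub_cancel, lt_self_iff_false,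
      if_true, if_false, mul_one]
    rfl
  rw [hmass, hconstant]
  exact h.exists_abs_weightedWalkCount_sub_le

theorem negative_drift_asymptotics_Q_nonzero
    (d : ℕ) (hd : 2 ≤ d)
    (S : Finset (Fin d → ℤ)) (w : (Fin d → ℤ) → ℝ)
    -- steps lie in {-1,0,1}^d \ {0}
    (hSsmall : ∀ i ∈ S, (∀ m : Fin d, i m = -1 ∨ i m = 0 ∨ i m = 1) ∧ i ≠ 0)
    -- nonnegative weights
    (hw : ∀ i ∈ S, 0 ≤ w i)
    -- symmetry of the weighting over each of the first d-1 axes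
    (hsym : ∀ j : Fin d, (j : ℕ) < d - 1 → ∀ i ∈ S,
      Function.update i j (-(i j)) ∈ S ∧ w (Function.update i j (-(i j))) = w i)
    -- a positively weighted step forwards and backwards in each coordinate
    (hfb : ∀ j : Fin d, (∃ i ∈ S, i j = 1 ∧ 0 < w i) ∧ (∃ i ∈ S, i j = -1 ∧ 0 < w i))
    (A1 B1 Q1 : ℝ)
    (hA1 : A1 = ∑ i ∈ S.filter (fun i => i ⟨d - 1, by omega⟩ = -1), w i)
    (hB1 : B1 = ∑ i ∈ S.filter (fun i => i ⟨d - 1, by omega⟩ = 1), w i)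
    (hQ1 : Q1 = ∑ i ∈ S.filter (fun i => i ⟨d - 1, by omega⟩ = 0), w i)
    -- negative drift
    (hdrift : B1 < A1)
    -- some step with vanishing last coordinate has positive weight
    (hQ : ∃ i ∈ S, i ⟨d - 1, by omega⟩ = 0 ∧ 0 < w i)
    (ρ Sρ Cρ : ℝ)
    (hρ : ρ = Real.sqrt (A1 / B1))
    (hSρ : Sρ = A1 / ρ + Q1 + ρ * B1)
    (hCρ : Cρ = (Sρ * ρ / (2 * Real.pi ^ ((d : ℝ) / 2) * A1 * (1 - 1 / ρ) ^ 2))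
        * Real.sqrt (Sρ ^ d /
            (ρ * (∏ j ∈ Finset.univ.filter (fun j : Fin d => (j : ℕ) < d - 1),
                    ∑ i ∈ S.filter (fun i => i j = 1), w i * ρ ^ (i ⟨d - 1, by omega⟩))
              * B1))) :
    ∃ c : ℝ, 0 < c ∧ ∀ n : ℕ, 1 ≤ n →
      |weightedWalkCount d S w n * Sρ ^ (-(n : ℤ)) * (n : ℝ) ^ ((d : ℝ) / 2 + 1) - Cρ|
        ≤ c / n := by
  exact negative_drift_asymptotics_Q_nonzero_general d (by omega) S w (fun i hi => (hSsmall i hi).1)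
    hw hsym (fun j => (hfb j).1) A1 B1 Q1 hA1 hB1 hQ1 hdrift hQ ρ Sρ Cρ hρ hSρ hCρ
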